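/- arXiv:2211.09465 — 2 statements merged into one kernel-verified Lean document; each statement's English description precedes it below -/
import Mathlib

section
/- Let p be a prime and let S ⊆ F_p^2 be a set of eight distinct points such that no five points of S are collinear and the eight points do not all lie on a common conic. Then S imposes independent conditions on cubic curves; that is, the F_p-vector space of polynomials in F_p[X,Y] of total degree at most 3 vanishing at every point of S has dimension exactly 2 (codimension 8 in the 10-dimensional space of all polynomials of total degree at most 3). -/
/-!
The space of cubics has dimension 10, so it suffices that the evaluation map from cubics to
functions on `S` is onto, i.e. that for every `q ∈ S` some cubic vanishes on `R = S \ {q}` but not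
at `q` (`exists_cubic_separating`).

If some conic vanishes on `R` but not at `q`, nothing is left to do. Otherwise every conic
vanishing on `R` vanishes on `S`, hence is zero, so the evaluations at the points of `R` span the
dual of the 6-dimensional space of conics. Choose six points `B ⊆ R` whose evaluations form a
basis, let `b` be the seventh point of `R`, and let `(f_x)` be the basis of conics dual to `B`
(`exists_dual_conics`). If some `x ∈ B` has `f_x(q) ≠ 0` and is not on the line `bq`, then the
product of `f_x` with the line `bx` is the desired cubic. If there is no such `x`, the support
`T = {x ∈ B | f_x(q) ≠ 0}` lies on the line `bq`; as no five points of `S` are collinear,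
`T` has at most two elements, so a product of two lines gives a conic `g` vanishing on `T` but
not at `q`, which contradicts `g(q) = ∑ g(x) f_x(q) = 0`.
-/

open scoped Classical

noncomputable section

def zeroSet {p : ℕ} (f : MvPolynomial (Fin 2) (ZMod p)) : Set (Fin 2 → ZMod p) :=
  {x | MvPolynomial.eval x f = 0}

/-- The space of polynomials of total degree at most 3 vanishing at every point of `S`. -/
def vanishingCubics (p : ℕ) (S : Finset (Fin 2 → ZMod p)) :
    Submodule (ZMod p) (MvPolynomial (Fin 2) (ZMod p)) :=
  MvPolynomial.restrictTotalDegree (Fin 2) (ZMod p) 3 ⊓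
    ⨅ q ∈ S, LinearMap.ker (MvPolynomial.aeval (R := ZMod p) q).toLinearMap

/-- A finite set of points is collinear if all its points lie on the zero set of a
polynomial of total degree 1. -/
def CollinearPts {p : ℕ} (T : Finset (Fin 2 → ZMod p)) : Prop :=
  ∃ f : MvPolynomial (Fin 2) (ZMod p), f.totalDegree = 1 ∧ ∀ q ∈ T, q ∈ zeroSet f

/-- A finite set of points lies on a common conic if all its points lie on the zero set
of a nonzero polynomial of total degree at most 2. -/
def OnCommonConic {p : ℕ} (T : Finset (Fin 2 → ZMod p)) : Prop :=
  ∃ g : MvPolynomial (Fin 2) (ZMod p), g ≠ 0 ∧ g.totalDegree ≤ 2 ∧ ∀ q ∈ T, q ∈ zeroSet g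

open MvPolynomial in
/-- The monomials of degree at most `n` form a basis; they are counted by their exponent pairs. -/
theorem finrank_restrictTotalDegree_fin_two (F : Type*) [Field F] (n : ℕ) :
    Module.finrank F (restrictTotalDegree (Fin 2) F n) =
      (Finset.filter (fun x : ℕ × ℕ => x.1 + x.2 ≤ n)
        (Finset.range (n + 1) ×ˢ Finset.range (n + 1))).card := by
  rw [restrictTotalDegree,
    Module.finrank_eq_nat_card_basis (basisRestrictSupport F {d | (d.sum fun _ e => e) ≤ n}),
    ← Nat.card_eq_finsetCard]
  refine Nat.card_congr ((Finsupp.equivFunOnFinite.trans (finTwoArrowEquiv ℕ)).subtypeEquiv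
    fun d => ?_)
  have : (d.sum fun _ e => e) = d 0 + d 1 := by
    rw [Finsupp.sum_fintype _ _ fun _ => rfl, Fin.sum_univ_two]
  simp [this]
  omega

section

variable {p : ℕ} [Fact p.Prime]

/-- The polynomial `(b₀ - a₀)(Y - a₁) - (b₁ - a₁)(X - a₀)`, which defines the line through `a` and
`b` when `a ≠ b`. -/
def lineThrough (a b : Fin 2 → ZMod p) : MvPolynomial (Fin 2) (ZMod p) :=
  MvPolynomial.C (b 0 - a 0) * (MvPolynomial.X 1 - MvPolynomial.C (a 1)) -
    MvPolynomial.C (b 1 - a 1) * (MvPolynomial.X 0 - MvPolynomial.C (a 0))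

theorem eval_lineThrough (a b x : Fin 2 → ZMod p) :
    MvPolynomial.eval x (lineThrough a b) =
      (b 0 - a 0) * (x 1 - a 1) - (b 1 - a 1) * (x 0 - a 0) := by
  simp [lineThrough]

theorem totalDegree_X_sub_C_le (i : Fin 2) (c : ZMod p) :
    (MvPolynomial.X i - MvPolynomial.C c : MvPolynomial (Fin 2) (ZMod p)).totalDegree ≤ 1 := by
  refine (MvPolynomial.totalDegree_sub_C_le _ _).trans ?_
  simp

theorem totalDegree_lineThrough_le (a b : Fin 2 → ZMod p) :
    (lineThrough a b).totalDegree ≤ 1 := by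
  refine (MvPolynomial.totalDegree_sub _ _).trans (max_le ?_ ?_) <;>
  · refine (MvPolynomial.totalDegree_mul _ _).trans ?_
    rw [MvPolynomial.totalDegree_C, zero_add]
    exact totalDegree_X_sub_C_le _ _

theorem totalDegree_lineThrough {a b : Fin 2 → ZMod p} (hab : a ≠ b) :
    (lineThrough a b).totalDegree = 1 := by
  refine le_antisymm (totalDegree_lineThrough_le a b) (Nat.one_le_iff_ne_zero.2 fun h => hab ?_)
  -- A constant polynomial takes the same value at `a`, `a + (1,0)` and `a + (0,1)`.
  rw [MvPolynomial.totalDegree_eq_zero_iff_eq_C] at h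
  have key : ∀ x y, MvPolynomial.eval x (lineThrough a b) =
      MvPolynomial.eval y (lineThrough a b) := by
    intro x y
    rw [h]
    simp
  have h1 := key a ![a 0 + 1, a 1]
  have h2 := key a ![a 0, a 1 + 1]
  simp only [eval_lineThrough] at h1 h2
  ext i
  fin_cases i
  · simp at h2
    simpa using (sub_eq_zero.1 h2.symm).symm
  · simp at h1
    simpa using sub_eq_zero.1 h1.symm

theorem exists_line_separating {x q : Fin 2 → ZMod p} (h : x ≠ q) :
    ∃ f : MvPolynomial (Fin 2) (ZMod p), f.totalDegree ≤ 1 ∧ MvPolynomial.eval x f = 0 ∧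
      MvPolynomial.eval q f ≠ 0 := by
  obtain ⟨i, hi⟩ := Function.ne_iff.1 h
  refine ⟨MvPolynomial.X i - MvPolynomial.C (x i), totalDegree_X_sub_C_le _ _, by simp, ?_⟩
  simpa [sub_eq_zero] using hi.symm

theorem exists_conic_separating {T : Finset (Fin 2 → ZMod p)} {q : Fin 2 → ZMod p}
    (hT : T.card ≤ 2) (hq : q ∉ T) :
    ∃ f : MvPolynomial (Fin 2) (ZMod p), f.totalDegree ≤ 2 ∧
      (∀ x ∈ T, MvPolynomial.eval x f = 0) ∧ MvPolynomial.eval q f ≠ 0 := by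
  have h : ∀ x : T, (x : Fin 2 → ZMod p) ≠ q := fun x hx => hq (hx ▸ x.2)
  choose l hl1 hl2 hl3 using fun x : T => exists_line_separating (h x)
  refine ⟨∏ x, l x, ?_, fun x hx => ?_, ?_⟩
  · refine (MvPolynomial.totalDegree_finsetProd _ _).trans ?_
    refine (Finset.sum_le_sum fun x _ => hl1 x).trans ?_
    simpa using hT
  · rw [map_prod]
    exact Finset.prod_eq_zero (Finset.mem_univ ⟨x, hx⟩) (hl2 ⟨x, hx⟩)
  · rw [map_prod]
    exact Finset.prod_ne_zero_iff.2 fun x _ => hl3 x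

/-- If the functionals `e i` have no common nonzero zero in `V`, then `dim V` of them, those with
index in `B`, form a coordinate system on `V`; the `f x`, `x ∈ B`, are the dual basis of `V`. -/
theorem exists_dual_family {F V ι : Type*} [Field F] [AddCommGroup V] [Module F V]
    [FiniteDimensional F V] (e : ι → Module.Dual F V) (he : ∀ v, (∀ i, e i v = 0) → v = 0) :
    ∃ (B : Finset ι) (f : ι → V), B.card = Module.finrank F V ∧
      (∀ x ∈ B, ∀ y ∈ B, e y (f x) = if x = y then 1 else 0) ∧
      ∀ v, v = ∑ x ∈ B, e x v • f x := by
  obtain ⟨κ, a, ha, hspan, hli⟩ := exists_linearIndependent' F e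
  have : Finite κ := hli.finite
  have := Fintype.ofFinite κ
  let E : V →ₗ[F] (κ → F) := LinearMap.pi fun k => e (a k)
  have hE : Function.Injective E := by
    rw [injective_iff_map_eq_zero]
    intro v hv
    refine he v fun i => ?_
    have hle : Submodule.span F (Set.range (e ∘ a)) ≤ LinearMap.ker (Module.Dual.eval F V v) := by
      rw [Submodule.span_le]
      rintro _ ⟨k, rfl⟩
      exact congrFun hv k
    rw [hspan] at hle
    exact hle (Submodule.subset_span ⟨i, rfl⟩)
  have hcard : Module.finrank F V = Fintype.card κ := by
    apply le_antisymm
    · simpa using LinearMap.finrank_le_finrank_of_injective hE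
    · simpa [Subspace.dual_finrank_eq] using hli.fintype_card_le_finrank
  have hsurj : Function.Surjective E :=
    (LinearMap.injective_iff_surjective_of_finrank_eq_finrank (by simpa using hcard)).1 hE
  choose g hg using fun k => hsurj (Pi.single k 1)
  have hg' : ∀ k k', e (a k') (g k) = if k = k' then 1 else 0 := by
    intro k k'
    have := congrFun (hg k) k'
    simpa [E, Pi.single_apply, eq_comm] using this
  refine ⟨Finset.univ.map ⟨a, ha⟩, Function.extend a g 0, by simp [hcard], ?_, ?_⟩
  · simp only [Finset.mem_map, Finset.mem_univ, true_and, Function.Embedding.coeFn_mk]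
    rintro _ ⟨k, rfl⟩ _ ⟨k', rfl⟩
    simp [ha.extend_apply, hg', ha.eq_iff]
  · intro v
    apply hE
    ext k'
    simp [ha.extend_apply, E, hg']

/-- If the only polynomial of degree at most 2 vanishing on `R` is zero, then evaluation at six
of the points of `R` identifies these polynomials with `F_p⁶`, which yields a dual basis. -/
theorem exists_dual_conics {R : Finset (Fin 2 → ZMod p)}
    (hR : ∀ g : MvPolynomial (Fin 2) (ZMod p), g.totalDegree ≤ 2 →
      (∀ x ∈ R, MvPolynomial.eval x g = 0) → g = 0) :
    ∃ B ⊆ R, B.card = 6 ∧ ∃ f : (Fin 2 → ZMod p) → MvPolynomial (Fin 2) (ZMod p),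
      (∀ x, (f x).totalDegree ≤ 2) ∧
      (∀ x ∈ B, ∀ y ∈ B, MvPolynomial.eval y (f x) = if x = y then 1 else 0) ∧
      ∀ g : MvPolynomial (Fin 2) (ZMod p), g.totalDegree ≤ 2 → ∀ q,
        MvPolynomial.eval q g =
          ∑ x ∈ B, MvPolynomial.eval x g * MvPolynomial.eval q (f x) := by
  let V := MvPolynomial.restrictTotalDegree (Fin 2) (ZMod p) 2
  let e : R → Module.Dual (ZMod p) V := fun x =>
    (MvPolynomial.aeval (R := ZMod p) (x : Fin 2 → ZMod p)).toLinearMap ∘ₗ V.subtype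
  have he : ∀ x v, e x v = MvPolynomial.eval (x : Fin 2 → ZMod p) (v : MvPolynomial _ _) := by
    intro x v
    simp [e]
  obtain ⟨B, f, hB, hf, hsum⟩ := exists_dual_family e (by
    intro v hv
    refine Subtype.ext (hR v ((MvPolynomial.mem_restrictTotalDegree _ _ _).1 v.2) fun x hx => ?_)
    rw [← he ⟨x, hx⟩]
    exact hv _)
  let f' : (Fin 2 → ZMod p) → MvPolynomial (Fin 2) (ZMod p) := fun x =>
    if hx : x ∈ R then f ⟨x, hx⟩ else 0
  have hf' : ∀ x : R, f' x = f x := fun x => by simp [f']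
  refine ⟨B.map (Function.Embedding.subtype _), ?_, ?_, f', ?_, ?_, ?_⟩
  · intro x hx
    obtain ⟨y, -, rfl⟩ := Finset.mem_map.1 hx
    exact y.2
  · rw [Finset.card_map, hB, finrank_restrictTotalDegree_fin_two]
    rfl
  · intro x
    by_cases hx : x ∈ R
    · have := (MvPolynomial.mem_restrictTotalDegree _ _ _).1 (f ⟨x, hx⟩).2
      simpa [f', hx] using this
    · simp [f', hx]
  · intro x hx y hy
    obtain ⟨x, hxB, rfl⟩ := Finset.mem_map.1 hx
    obtain ⟨y, hyB, rfl⟩ := Finset.mem_map.1 hy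
    simp only [Function.Embedding.subtype_apply, hf', ← he, hf x hxB y hyB, Subtype.ext_iff]
    congr
  · intro g hg q
    have := congrArg (fun v : V => MvPolynomial.eval q (v : MvPolynomial _ _))
      (hsum ⟨g, (MvPolynomial.mem_restrictTotalDegree _ _ _).2 hg⟩)
    simpa [hf', he, MvPolynomial.smul_eval] using this

/-- Surjectivity of evaluation on `S`, one point at a time: some cubic vanishes at all points of `S`
but `q`. -/
theorem exists_cubic_separating {S : Finset (Fin 2 → ZMod p)} (hS : S.card = 8)
    (hcol : ∀ T ⊆ S, T.card = 5 → ¬ CollinearPts T) (hconic : ¬ OnCommonConic S)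
    {q : Fin 2 → ZMod p} (hq : q ∈ S) :
    ∃ f : MvPolynomial (Fin 2) (ZMod p), f.totalDegree ≤ 3 ∧
      (∀ x ∈ S, x ≠ q → MvPolynomial.eval x f = 0) ∧ MvPolynomial.eval q f ≠ 0 := by
  by_cases h : ∃ g : MvPolynomial (Fin 2) (ZMod p), g.totalDegree ≤ 2 ∧
      (∀ x ∈ S.erase q, MvPolynomial.eval x g = 0) ∧ MvPolynomial.eval q g ≠ 0
  · obtain ⟨g, hg, hgR, hgq⟩ := h
    exact ⟨g, by omega, fun x hx hxq => hgR x (Finset.mem_erase.2 ⟨hxq, hx⟩), hgq⟩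
  push Not at h
  obtain ⟨B, hBR, hB, f, hf2, hf, hsum⟩ := exists_dual_conics (R := S.erase q) (by
    intro g hg hgR
    by_contra hg0
    refine hconic ⟨g, hg0, hg, fun x hx => ?_⟩
    by_cases hxq : x = q
    · exact hxq ▸ h g hg hgR
    · exact hgR x (Finset.mem_erase.2 ⟨hxq, hx⟩))
  have hR : (S.erase q).card = 7 := by rw [Finset.card_erase_of_mem hq, hS]
  obtain ⟨b, hb⟩ : ∃ b, S.erase q \ B = {b} := by
    rw [← Finset.card_eq_one, Finset.card_sdiff_of_subset hBR, hR, hB]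
  have hbmem : b ∈ S.erase q \ B := hb ▸ Finset.mem_singleton_self b
  obtain ⟨hbR, hbB⟩ := Finset.mem_sdiff.1 hbmem
  obtain ⟨hbq, hbS⟩ := Finset.mem_erase.1 hbR
  have hcover : ∀ x ∈ S, x ≠ q → x ∈ B ∨ x = b := by
    intro x hx hxq
    by_contra! hcon
    have : x ∈ S.erase q \ B := Finset.mem_sdiff.2 ⟨Finset.mem_erase.2 ⟨hxq, hx⟩, hcon.1⟩
    rw [hb, Finset.mem_singleton] at this
    exact hcon.2 this
  by_cases hx : ∃ x ∈ B, MvPolynomial.eval q (f x) ≠ 0 ∧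
      MvPolynomial.eval q (lineThrough b x) ≠ 0
  · obtain ⟨x, hxB, hfx, hlx⟩ := hx
    refine ⟨lineThrough b x * f x, ?_, fun y hy hyq => ?_, ?_⟩
    · have h1 := totalDegree_lineThrough_le b x
      have h2 := hf2 x
      have h3 := MvPolynomial.totalDegree_mul (lineThrough b x) (f x)
      omega
    · rw [map_mul]
      rcases hcover y hy hyq with hyB | rfl
      · rcases eq_or_ne x y with rfl | hxy
        · rw [eval_lineThrough]
          ring
        · rw [hf x hxB y hyB, if_neg hxy, mul_zero]
      · rw [eval_lineThrough]
        ring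
    · rw [map_mul]
      exact mul_ne_zero hlx hfx
  · exfalso
    push Not at hx
    set T := B.filter fun x => MvPolynomial.eval q (f x) ≠ 0 with hT
    have hTB : T ⊆ B := Finset.filter_subset _ _
    have hqT : q ∉ T := fun hqT => Finset.notMem_erase q S (hBR (hTB hqT))
    have hTcard : T.card ≤ 2 := by
      by_contra! hlt
      have hcard : 5 ≤ (insert q (insert b T)).card := by
        rw [Finset.card_insert_of_notMem, Finset.card_insert_of_notMem fun hbT => hbB (hTB hbT)]
        · omega
        · simp [hqT, hbq.symm]
      obtain ⟨U, hU, hU5⟩ := Finset.exists_subset_card_eq hcard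
      have hsub : insert q (insert b T) ⊆ S := by
        refine Finset.insert_subset hq (Finset.insert_subset hbS fun x hx => ?_)
        exact Finset.mem_of_mem_erase (hBR (hTB hx))
      refine hcol U (hU.trans hsub) hU5
        ⟨lineThrough b q, totalDegree_lineThrough hbq, fun x hxU => ?_⟩
      change MvPolynomial.eval x (lineThrough b q) = 0
      rw [eval_lineThrough]
      rcases Finset.mem_insert.1 (hU hxU) with rfl | hxU
      · ring
      rcases Finset.mem_insert.1 hxU with rfl | hxT
      · ring
      obtain ⟨hxB, hfx⟩ := Finset.mem_filter.1 hxT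
      have := hx x hxB hfx
      rw [eval_lineThrough] at this
      linear_combination -this
    obtain ⟨g, hg, hgT, hgq⟩ := exists_conic_separating hTcard hqT
    refine hgq ?_
    rw [hsum g hg q]
    refine Finset.sum_eq_zero fun x hxB => ?_
    by_cases hfx : MvPolynomial.eval q (f x) = 0
    · rw [hfx, mul_zero]
    · rw [hgT x (Finset.mem_filter.2 ⟨hxB, hfx⟩), zero_mul]

end

theorem eight_points_independent_conditions
    (p : ℕ) [Fact p.Prime] (S : Finset (Fin 2 → ZMod p)) (hS : S.card = 8)
    (hcol : ∀ T ⊆ S, T.card = 5 → ¬ CollinearPts T)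
    (hconic : ¬ OnCommonConic S) :
    Module.finrank (ZMod p) (vanishingCubics p S) = 2 := by
  let V := MvPolynomial.restrictTotalDegree (Fin 2) (ZMod p) 3
  let E : V →ₗ[ZMod p] (S → ZMod p) := LinearMap.pi fun x =>
    (MvPolynomial.aeval (R := ZMod p) (x : Fin 2 → ZMod p)).toLinearMap ∘ₗ V.subtype
  have hE : ∀ v x, E v x = MvPolynomial.eval (x : Fin 2 → ZMod p) (v : MvPolynomial _ _) := by
    intro v x
    simp [E]
  have hker : vanishingCubics p S = (LinearMap.ker E).map V.subtype := by
    ext f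
    simp only [vanishingCubics, Submodule.mem_inf, Submodule.mem_iInf, LinearMap.mem_ker,
      Submodule.mem_map]
    constructor
    · rintro ⟨hf, h0⟩
      exact ⟨⟨f, hf⟩, funext fun x => h0 x x.2, rfl⟩
    · rintro ⟨v, hv, rfl⟩
      exact ⟨v.2, fun x hx => congrFun hv ⟨x, hx⟩⟩
  have hsurj : Function.Surjective E := by
    choose f hf3 hf0 hfq using fun q : S =>
      exists_cubic_separating hS hcol hconic q.2
    intro φ
    refine ⟨∑ q, (φ q / MvPolynomial.eval (q : Fin 2 → ZMod p) (f q)) •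
      (⟨f q, (MvPolynomial.mem_restrictTotalDegree _ _ _).2 (hf3 q)⟩ : V), ?_⟩
    ext x
    rw [map_sum, Finset.sum_apply, Finset.sum_eq_single x]
    · rw [map_smul, Pi.smul_apply, hE, smul_eq_mul]
      exact div_mul_cancel₀ _ (hfq x)
    · intro q _ hqx
      rw [map_smul, Pi.smul_apply, hE]
      have := hf0 q x x.2 fun h => hqx (Subtype.ext h.symm)
      simp [this]
    · simp
  have hrank := LinearMap.finrank_range_add_finrank_ker E
  rw [LinearMap.range_eq_top.2 hsurj, finrank_top, Module.finrank_fintype_fun_eq_card,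
    Fintype.card_coe, hS, finrank_restrictTotalDegree_fin_two] at hrank
  have h10 : (Finset.filter (fun x : ℕ × ℕ => x.1 + x.2 ≤ 3)
      (Finset.range (3 + 1) ×ˢ Finset.range (3 + 1))).card = 10 := rfl
  rw [hker, Submodule.finrank_map_subtype_eq]
  omega
end
end

section
/- There is an absolute constant c > 0 such that the following holds for every prime p. Let L be a finite set of lines in F_p^2 with |L| ≤ p^{15/13}, and for an integer t ≥ 2 let P_t denote the set of points of F_p^2 that lie on at least t lines of L. Then |P_t| ≤ c·( |L|^{11/4}/t^{15/4} + |L|/t ). -/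
/-!
The proof bounds the set `P` of `t`-rich points, `m = |P|`, `n = |L|`, after choosing exactly `t` lines
through every point of `P`. If `m t < 8 n`, if `t² > 2 n`, or if `p` is bounded, then `m ≲ n / t` (in the second
case by the Cauchy–Schwarz bound `card_mul_sq_le`). In the remaining case `t¹⁵ m⁴ ≲ n¹¹` is proved.

*A grid.* Averaging over pairs of points (`exists_cross`) gives `q₁, q₂ ∈ P` such that at least
`t⁴ m / (512 n²)` points of `P` lie on one of the `t` lines of `q₁` and on one of the `t` lines of `q₂`. A
projective map sending `q₁` and `q₂` to infinity places these points in a grid `A × B` with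
`|A|, |B| ≤ t`, where they are still `(t - 1)`-rich with respect to lines `b = m a + c` (`cross_count`). So
it suffices that such a set `G` in the grid satisfies `|G|⁴ ≲ t n³`.

*Lines in space.* By Cauchy–Schwarz, it suffices to count pairs of points `(a, b), (a', b)` of `G` with a
line `(m, c)` through `(a', b)` and a line `(m', c')` through `(a, b)` (`grid_count`). Each gives a solution
of `c + m a' = c' + m' a`, an incidence between the S-line `x = a, z = c + m y` and the T-line
`y = a', z = c' + m' x` in three-space. There are at most `t n` lines of each kind. A generic linear change
of line coordinates over `F_p(λ)`, respecting the incidence relation, makes the `x` of an S-line and the `y`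
of a T-line determine the line (`gridConfig`).

*The polynomial method.* `Config.main_count` bounds these incidences by `O((t n)^(3/2))`, up to a lower
order term with a logarithm. A piece of the S-lines is put on a surface `f = 0` of low degree. On an
irreducible component, either the component is not ruled by S-lines and the polynomial `flex f`, which
vanishes on all its S-lines, together with Bezout's theorem controls the incidences
(`Config.irreducible_case`), or it is ruled by S-lines. A ruled component with more than a few T-lines is a
quadric `z = A x y + B x + C y + D` (`quadric_of_two`), and on such a quadric a T-line has at most `t` marked
incidences. These arguments need the degrees, of order `(t n)^(1/2) ≲ n^(3/4)`, to be below the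
characteristic `p`; this is where `|L| ≤ p^(15/13)` enters (`exists_scale`).
-/

open scoped Classical

noncomputable section

/-- A set `l ⊆ F_p^2` is a line if it is the zero set of a polynomial of total degree 1. -/
def IsLine {p : ℕ} (l : Set (Fin 2 → ZMod p)) : Prop :=
  ∃ f : MvPolynomial (Fin 2) (ZMod p), f.totalDegree = 1 ∧ l = zeroSet f

/-! ### Derivatives and elimination -/

namespace RichPoints
open MvPolynomial

theorem chain_rule {K B : Type*} [Field K] [CommRing B] [Algebra K B] (D : Derivation K B B)
    (g : Fin 3 → B) (f : MvPolynomial (Fin 3) K) :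
    D (aeval g f) = ∑ i, aeval g (pderiv i f) * D (g i) := by
  induction f using MvPolynomial.induction_on with
  | C a => simp
  | add p q hp hq => simp [hp, hq, add_mul, Finset.sum_add_distrib]
  | mul_X p n hp =>
    simp only [map_mul, aeval_X, Derivation.leibniz, hp, smul_eq_mul, map_add, pderiv_X, add_mul,
      Finset.sum_add_distrib]
    congr 1
    · rw [Finset.sum_eq_single n]
      · simp
      · intro b _ hb
        simp [hb.symm]
      · simp
    · rw [Finset.mul_sum]
      exact Finset.sum_congr rfl fun i _ => by ring

theorem totalDegree_pderiv_le {K : Type*} [Field K] (i : Fin 3) (f : MvPolynomial (Fin 3) K) :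
    (pderiv i f).totalDegree ≤ f.totalDegree - 1 := by
  refine Finset.sup_le fun m hm => ?_
  rw [mem_support_iff, coeff_pderiv] at hm
  have h1 : m + Finsupp.single i 1 ∈ f.support := by
    rw [mem_support_iff]; exact left_ne_zero_of_mul hm
  have h2 := le_totalDegree h1
  rw [Finsupp.sum_add_index' (by simp) (by simp), Finsupp.sum_single_index rfl] at h2
  omega

theorem finSuccEquiv_rename_succ {K : Type*} [Field K] (r : MvPolynomial (Fin 2) K) :
    finSuccEquiv K 2 (rename Fin.succ r) = Polynomial.C r := by
  induction r using MvPolynomial.induction_on with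
  | C a => simp [finSuccEquiv_apply]
  | add p q hp hq => simp [hp, hq]
  | mul_X p n hp => rw [map_mul, map_mul, hp, rename_X, finSuccEquiv_X_succ, Polynomial.C_mul]

theorem totalDegree_resultant_le {K : Type*} [Field K] (F G : Polynomial (MvPolynomial (Fin 2) K))
    (m n e e' : ℕ) (hF : ∀ i, (F.coeff i).totalDegree ≤ e) (hG : ∀ i, (G.coeff i).totalDegree ≤ e') :
    (F.resultant G m n).totalDegree ≤ m * e' + n * e := by
  rw [Polynomial.resultant, Matrix.det_apply]
  refine totalDegree_finsetSum_le fun σ _ => ?_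
  refine (totalDegree_smul_le _ _).trans ?_
  refine (totalDegree_finsetProd _ _).trans ?_
  rw [Fin.sum_univ_add]
  refine add_le_add ?_ ?_
  · refine (Finset.sum_le_card_nsmul _ _ e' fun j _ => ?_).trans (by simp)
    simp only [Polynomial.sylvester, Matrix.of_apply, Fin.addCases_left]
    split_ifs
    · exact hG _
    · simp
  · refine (Finset.sum_le_card_nsmul _ _ e fun j _ => ?_).trans (by simp)
    simp only [Polynomial.sylvester, Matrix.of_apply, Fin.addCases_right]
    split_ifs
    · exact hF _
    · simp

/-- By Gauss's lemma an irreducible `F` of positive degree stays irreducible over the fraction field,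
so it is coprime there to every `G` it does not divide. -/
theorem resultant_ne_zero_of_not_dvd {R : Type*} [CommRing R] [IsDomain R] [UniqueFactorizationMonoid R]
    (F G : Polynomial R) (hF : Irreducible F) (hz : 0 < F.natDegree) (hFG : ¬ F ∣ G) :
    F.resultant G ≠ 0 := by
  let := UniqueFactorizationMonoid.toGCDMonoid R
  intro h0
  set Q := FractionRing R
  set φ := algebraMap R Q
  have hφ : Function.Injective φ := IsFractionRing.injective R Q
  have hp : F.IsPrimitive := hF.isPrimitive hz.ne'
  have hFQ : Irreducible (F.map φ) := (hp.irreducible_iff_irreducible_map_fraction_map).1 hF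
  have h1 : (F.map φ).resultant (G.map φ) = 0 := by
    rw [Polynomial.natDegree_map_eq_of_injective hφ, Polynomial.natDegree_map_eq_of_injective hφ,
      Polynomial.resultant_map_map, h0, map_zero]
  rw [Polynomial.resultant_eq_zero_iff] at h1
  have h2 : F.map φ ∣ G.map φ := by
    by_contra hc
    exact h1.2 ((hFQ.coprime_iff_not_dvd).2 hc)
  exact hFG (hp.dvd_of_fraction_map_dvd_fraction_map h2)

/-- Elimination of the first variable `z` by the resultant: if `f` is irreducible, involves `z` and does not
divide `g`, the ideal `(f, g)` contains a nonzero polynomial in the other two variables, of degree at most `2 deg f deg g`. -/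
theorem elim {K : Type*} [Field K] (f g : MvPolynomial (Fin 3) K) (hf : Irreducible f)
    (hz : 0 < (finSuccEquiv K 2 f).natDegree) (hfg : ¬ f ∣ g) :
    ∃ r : MvPolynomial (Fin 2) K, r ≠ 0 ∧ r.totalDegree ≤ 2 * (f.totalDegree * g.totalDegree) ∧
      ∃ a b, rename Fin.succ r = a * f + b * g := by
  set F := finSuccEquiv K 2 f with hF
  set G := finSuccEquiv K 2 g with hG
  have hFi : Irreducible F := (MulEquiv.irreducible_iff (finSuccEquiv K 2)).2 hf
  have hFG : ¬ F ∣ G := by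
    rw [hF, hG, map_dvd_iff]; exact hfg
  have hco : ∀ (h : MvPolynomial (Fin 3) K) i, ((finSuccEquiv K 2 h).coeff i).totalDegree ≤ h.totalDegree := by
    intro h i
    by_cases h0 : (finSuccEquiv K 2 h).coeff i = 0
    · simp [h0]
    · have := totalDegree_coeff_finSuccEquiv_add_le h i h0
      omega
  have hnd : ∀ (h : MvPolynomial (Fin 3) K), (finSuccEquiv K 2 h).natDegree ≤ h.totalDegree := by
    intro h
    rw [natDegree_finSuccEquiv]; exact degreeOf_le_totalDegree _ _
  refine ⟨F.resultant G, resultant_ne_zero_of_not_dvd F G hFi hz hFG, ?_, ?_⟩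
  · refine (totalDegree_resultant_le F G _ _ _ _ (hco f) (hco g)).trans ?_
    have h1 := hnd f
    have h2 := hnd g
    have h3 := Nat.mul_le_mul_right g.totalDegree h1
    have h4 := Nat.mul_le_mul_right f.totalDegree h2
    rw [← hF] at h3
    rw [← hG] at h4
    linarith [mul_comm f.totalDegree g.totalDegree]
  · obtain ⟨a, b, -, -, h⟩ := Polynomial.exists_mul_add_mul_eq_C_resultant F G le_rfl le_rfl (Or.inl hz.ne')
    refine ⟨(finSuccEquiv K 2).symm a, (finSuccEquiv K 2).symm b, ?_⟩
    apply (finSuccEquiv K 2).injective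
    rw [finSuccEquiv_rename_succ, ← h]
    simp [hF, hG, mul_comm]
end RichPoints

/-! ### S-lines and T-lines on surfaces -/

namespace RichPoints
open MvPolynomial

variable {K : Type*} [Field K]

/-- Restriction of a polynomial in `(z, x, y)` to the T-line `y = y₀`, `z = γ + δ x`, parametrized by `x`. -/
def tsub (y γ δ : K) : MvPolynomial (Fin 3) K →ₐ[K] Polynomial K :=
  aeval ![Polynomial.C γ + Polynomial.C δ * Polynomial.X, Polynomial.X, Polynomial.C y]

/-- Restriction of a polynomial in `(z, x, y)` to the S-line `x = x₀`, `z = α + β y`, parametrized by `y`. -/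
def ssub (x α β : K) : MvPolynomial (Fin 3) K →ₐ[K] Polynomial K :=
  aeval ![Polynomial.C α + Polynomial.C β * Polynomial.X, Polynomial.C x, Polynomial.X]

theorem eval_aeval3 (g : Fin 3 → Polynomial K) (f : MvPolynomial (Fin 3) K) (u : K) :
    (aeval g f : Polynomial K).eval u = eval (fun i => (g i).eval u) f := by
  have : (Polynomial.evalRingHom u).comp (aeval g : MvPolynomial (Fin 3) K →ₐ[K] Polynomial K).toRingHom
      = eval (fun i => (g i).eval u) := by
    ext i <;> simp
  exact congrArg (fun h => h f) this

theorem eval_aeval2 (g : Fin 2 → Polynomial K) (f : MvPolynomial (Fin 2) K) (u : K) :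
    (aeval g f : Polynomial K).eval u = eval (fun i => (g i).eval u) f := by
  have : (Polynomial.evalRingHom u).comp (aeval g : MvPolynomial (Fin 2) K →ₐ[K] Polynomial K).toRingHom
      = eval (fun i => (g i).eval u) := by
    ext i <;> simp
  exact congrArg (fun h => h f) this

theorem eval_tsub (y γ δ u : K) (f : MvPolynomial (Fin 3) K) :
    (tsub y γ δ f).eval u = eval ![γ + δ * u, u, y] f := by
  rw [tsub, eval_aeval3]
  congr 2
  funext i; fin_cases i <;> simp

theorem eval_ssub (x α β u : K) (f : MvPolynomial (Fin 3) K) :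
    (ssub x α β f).eval u = eval ![α + β * u, x, u] f := by
  rw [ssub, eval_aeval3]
  congr 2
  funext i; fin_cases i <;> simp

theorem natDegree_tsub_le (y γ δ : K) (f : MvPolynomial (Fin 3) K) :
    (tsub y γ δ f).natDegree ≤ f.totalDegree := by
  have := MvPolynomial.aeval_natDegree_le (m := f.totalDegree) (n := 1) f le_rfl
    ![Polynomial.C γ + Polynomial.C δ * Polynomial.X, Polynomial.X, Polynomial.C y] (by
      intro i; fin_cases i
      · simp only [Fin.zero_eta, Matrix.cons_val_zero]; compute_degree
      · simp
      · simp)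
  simpa [tsub] using this

theorem natDegree_ssub_le (x α β : K) (f : MvPolynomial (Fin 3) K) :
    (ssub x α β f).natDegree ≤ f.totalDegree := by
  have := MvPolynomial.aeval_natDegree_le (m := f.totalDegree) (n := 1) f le_rfl
    ![Polynomial.C α + Polynomial.C β * Polynomial.X, Polynomial.C x, Polynomial.X] (by
      intro i; fin_cases i
      · simp only [Fin.zero_eta, Matrix.cons_val_zero]; compute_degree
      · simp
      · simp)
  simpa [ssub] using this

/-- A nonzero bivariate polynomial contains at most `deg r` horizontal lines. -/
theorem card_le_of_eval_right [Infinite K] (r : MvPolynomial (Fin 2) K) (hr : r ≠ 0) (Y : Finset K)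
    (hY : ∀ y ∈ Y, ∀ x, eval ![x, y] r = 0) : Y.card ≤ r.totalDegree := by
  obtain ⟨v, hv⟩ : ∃ v, eval v r ≠ 0 := by
    by_contra! h
    exact hr (MvPolynomial.funext fun v => by simp [h v])
  set P : Polynomial K := aeval ![Polynomial.C (v 0), Polynomial.X] r with hP
  have hev : ∀ u, P.eval u = eval ![v 0, u] r := by
    intro u
    rw [hP, eval_aeval2]
    congr 2
    funext i; fin_cases i <;> simp
  have hP0 : P ≠ 0 := by
    intro h
    have := hev (v 1)
    rw [h, Polynomial.eval_zero] at this
    apply hv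
    rw [this]
    congr 2
    funext i; fin_cases i <;> simp
  have hd : P.natDegree ≤ r.totalDegree * 1 := by
    refine MvPolynomial.aeval_natDegree_le (m := r.totalDegree) (n := 1) r le_rfl _ ?_
    intro i; fin_cases i <;> simp
  have := Polynomial.card_le_degree_of_subset_roots (p := P) (Z := Y) (by
    intro y hy
    rw [Polynomial.mem_roots hP0, Polynomial.IsRoot, hev]
    exact hY y hy _)
  omega

/-- A nonzero bivariate polynomial contains at most `deg r` vertical lines. -/
theorem card_le_of_eval_left [Infinite K] (r : MvPolynomial (Fin 2) K) (hr : r ≠ 0) (Y : Finset K)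
    (hY : ∀ y ∈ Y, ∀ x, eval ![y, x] r = 0) : Y.card ≤ r.totalDegree := by
  have := card_le_of_eval_right (rename (Equiv.swap (0 : Fin 2) 1) r)
    (by
      intro h
      exact hr (rename_injective _ (Equiv.injective _) (by simpa using h))) Y (by
      intro y hy x
      rw [eval_rename, ← hY y hy x]
      congr 2
      funext i; fin_cases i <;> simp)
  exact this.trans (totalDegree_rename_le _ _)

/-- A form of Bezout's theorem: two surfaces, the first irreducible and involving `z`, that have no
common component share at most `2 deg f deg g` T-lines. Eliminating `z` turns the T-lines into lines
`y = const` of a plane curve. -/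
theorem bezout_T [Infinite K] {κ : Type*} (f g : MvPolynomial (Fin 3) K) (hf : Irreducible f)
    (hz : 0 < (finSuccEquiv K 2 f).natDegree) (hfg : ¬ f ∣ g) (T : Finset κ) (y γ δ : κ → K)
    (hy : Set.InjOn y T) (hT : ∀ τ ∈ T, tsub (y τ) (γ τ) (δ τ) f = 0 ∧ tsub (y τ) (γ τ) (δ τ) g = 0) :
    T.card ≤ 2 * (f.totalDegree * g.totalDegree) := by
  obtain ⟨r, hr, hd, a, b, hab⟩ := elim f g hf hz hfg
  refine le_trans ?_ hd
  rw [← Finset.card_image_of_injOn hy]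
  refine card_le_of_eval_right r hr _ fun y' hy' x => ?_
  obtain ⟨τ, hτ, rfl⟩ := Finset.mem_image.1 hy'
  have h1 : eval ![γ τ + δ τ * x, x, y τ] (rename Fin.succ r) = 0 := by
    rw [← eval_tsub, hab, map_add, map_mul, map_mul, (hT τ hτ).1, (hT τ hτ).2]
    simp
  rw [eval_rename] at h1
  rw [← h1]
  congr 2

/-- The counterpart of `bezout_T` for S-lines. -/
theorem bezout_S [Infinite K] {κ : Type*} (f g : MvPolynomial (Fin 3) K) (hf : Irreducible f)
    (hz : 0 < (finSuccEquiv K 2 f).natDegree) (hfg : ¬ f ∣ g) (S : Finset κ) (x α β : κ → K)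
    (hx : Set.InjOn x S) (hS : ∀ σ ∈ S, ssub (x σ) (α σ) (β σ) f = 0 ∧ ssub (x σ) (α σ) (β σ) g = 0) :
    S.card ≤ 2 * (f.totalDegree * g.totalDegree) := by
  obtain ⟨r, hr, hd, a, b, hab⟩ := elim f g hf hz hfg
  refine le_trans ?_ hd
  rw [← Finset.card_image_of_injOn hx]
  refine card_le_of_eval_left r hr _ fun y' hy' u => ?_
  obtain ⟨σ, hσ, rfl⟩ := Finset.mem_image.1 hy'
  have h1 : eval ![α σ + β σ * u, x σ, u] (rename Fin.succ r) = 0 := by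
    rw [← eval_ssub, hab, map_add, map_mul, map_mul, (hS σ hσ).1, (hS σ hσ).2]
    simp
  rw [eval_rename] at h1
  rw [← h1]
  congr 2

/-- An irreducible `f` of positive degree in `z` divides every polynomial that shares infinitely many
S-lines with it. -/
theorem dvd_of_infinite_S [Infinite K] (f g : MvPolynomial (Fin 3) K) (hf : Irreducible f)
    (hz : 0 < (finSuccEquiv K 2 f).natDegree) (A : Set K) (hA : A.Infinite) (α β : K → K)
    (hS : ∀ x ∈ A, ssub x (α x) (β x) f = 0 ∧ ssub x (α x) (β x) g = 0) : f ∣ g := by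
  by_contra hfg
  obtain ⟨S, hSA, hS'⟩ := hA.exists_subset_card_eq (2 * (f.totalDegree * g.totalDegree) + 1)
  have := bezout_S f g hf hz hfg S id α β (Function.injective_id.injOn)
    (fun σ hσ => hS σ (hSA hσ))
  omega

end RichPoints

/-! ### Surfaces ruled by S-lines -/

namespace RichPoints
open MvPolynomial

variable {K : Type*} [Field K]

theorem pderiv_comm3 (i j : Fin 3) (f : MvPolynomial (Fin 3) K) :
    pderiv i (pderiv j f) = pderiv j (pderiv i f) := by
  ext m
  simp only [coeff_pderiv]
  by_cases h : i = j
  · subst h; rfl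
  · rw [add_right_comm]
    simp [h, Ne.symm h]
    ring

/-- With coordinates ordered `(z, x, y)`, the numerator of `-d²z/dy²` along the curves cut out of the
surface `f = 0` by the planes `x = const`: `f_yy f_z² - 2 f_yz f_y f_z + f_zz f_y²`. It vanishes on
every S-line contained in the surface, and `f ∣ flex f` says that the surface is ruled by S-lines. -/
def flex (f : MvPolynomial (Fin 3) K) : MvPolynomial (Fin 3) K :=
  pderiv 2 (pderiv 2 f) * pderiv 0 f ^ 2 - 2 * pderiv 2 (pderiv 0 f) * pderiv 2 f * pderiv 0 f
    + pderiv 0 (pderiv 0 f) * pderiv 2 f ^ 2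

theorem totalDegree_flex_le (f : MvPolynomial (Fin 3) K) :
    (flex f).totalDegree ≤ 3 * f.totalDegree := by
  have h1 : ∀ i, (pderiv i f).totalDegree ≤ f.totalDegree :=
    fun i => (totalDegree_pderiv_le i f).trans (Nat.sub_le _ _)
  have h2 : ∀ i j, (pderiv i (pderiv j f)).totalDegree ≤ f.totalDegree :=
    fun i j => (totalDegree_pderiv_le i _).trans ((Nat.sub_le _ _).trans (h1 j))
  have hsq : ∀ i, (pderiv i f ^ 2).totalDegree ≤ 2 * f.totalDegree :=
    fun i => (totalDegree_pow _ _).trans (Nat.mul_le_mul_left _ (h1 i))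
  have h2' : (2 : MvPolynomial (Fin 3) K).totalDegree = 0 := by
    have : (2 : MvPolynomial (Fin 3) K) = C 2 := (map_ofNat C 2).symm
    rw [this, totalDegree_C]
  unfold flex
  refine (totalDegree_add _ _).trans (max_le ((totalDegree_sub _ _).trans (max_le ?_ ?_)) ?_)
  · have := totalDegree_mul (pderiv 2 (pderiv 2 f)) (pderiv 0 f ^ 2)
    have := h2 2 2; have := hsq 0; omega
  · have a1 := totalDegree_mul (2 * pderiv 2 (pderiv 0 f) * pderiv 2 f) (pderiv 0 f)
    have a2 := totalDegree_mul (2 * pderiv 2 (pderiv 0 f)) (pderiv 2 f)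
    have a3 := totalDegree_mul 2 (pderiv 2 (pderiv 0 f))
    have := h2 2 0; have := h1 0; have := h1 2; omega
  · have := totalDegree_mul (pderiv 0 (pderiv 0 f)) (pderiv 2 f ^ 2)
    have := h2 0 0; have := hsq 2; omega

theorem derivative_aeval (g : Fin 3 → Polynomial K) (f : MvPolynomial (Fin 3) K) :
    Polynomial.derivative (aeval g f) = ∑ i, aeval g (pderiv i f) * Polynomial.derivative (g i) :=
  chain_rule Polynomial.derivative' g f

theorem derivative_sline (z0 z1 x0 y0 : K) (f : MvPolynomial (Fin 3) K) :
    Polynomial.derivative (aeval ![Polynomial.C z0 + Polynomial.C z1 * Polynomial.X, Polynomial.C x0,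
      Polynomial.C y0 + Polynomial.X] f) =
      aeval ![Polynomial.C z0 + Polynomial.C z1 * Polynomial.X, Polynomial.C x0,
      Polynomial.C y0 + Polynomial.X] (pderiv 2 f) + Polynomial.C z1 *
      aeval ![Polynomial.C z0 + Polynomial.C z1 * Polynomial.X, Polynomial.C x0,
      Polynomial.C y0 + Polynomial.X] (pderiv 0 f) := by
  rw [derivative_aeval, Fin.sum_univ_three]
  simp
  ring

/-- If `f ∣ flex f`, then through every point of the surface with `f_z ≠ 0` passes an S-line contained
in the surface, namely the tangent in the plane `x = const`. The restriction `h` of `f` to the tangent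
satisfies `b² h'' = h * (…) + h' * (…)` with `b(0) ≠ 0`, so its coefficients vanish one after the
other; this divides by integers up to `deg f`, which is why the characteristic must exceed `deg f`. -/
theorem sline_of_flex [Infinite K] (p : ℕ) [CharP K p] (f : MvPolynomial (Fin 3) K)
    (he : f.totalDegree < p) (hG : f ∣ flex f) (z0 x0 y0 : K) (h0 : eval ![z0, x0, y0] f = 0)
    (hz : eval ![z0, x0, y0] (pderiv 0 f) ≠ 0) (z1 : K)
    (hz1 : eval ![z0, x0, y0] (pderiv 2 f) + z1 * eval ![z0, x0, y0] (pderiv 0 f) = 0) :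
    ssub x0 (z0 - z1 * y0) z1 f = 0 := by
  set g : Fin 3 → Polynomial K := ![Polynomial.C z0 + Polynomial.C z1 * Polynomial.X, Polynomial.C x0,
      Polynomial.C y0 + Polynomial.X] with hg
  have hev0 : ∀ q : MvPolynomial (Fin 3) K, (aeval g q : Polynomial K).coeff 0 = eval ![z0, x0, y0] q := by
    intro q
    rw [Polynomial.coeff_zero_eq_eval_zero, eval_aeval3]
    congr 2
    funext i; fin_cases i <;> simp [hg]
  set h : Polynomial K := aeval g f with hh
  set a : Polynomial K := aeval g (pderiv 2 f) with ha
  set b : Polynomial K := aeval g (pderiv 0 f) with hb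
  have hd1 : Polynomial.derivative h = a + Polynomial.C z1 * b := derivative_sline z0 z1 x0 y0 f
  have hd2 : Polynomial.derivative (Polynomial.derivative h) =
      aeval g (pderiv 2 (pderiv 2 f)) + 2 * Polynomial.C z1 * aeval g (pderiv 2 (pderiv 0 f))
        + Polynomial.C z1 ^ 2 * aeval g (pderiv 0 (pderiv 0 f)) := by
    have e1 : Polynomial.derivative a = _ := derivative_sline z0 z1 x0 y0 (pderiv 2 f)
    have e2 : Polynomial.derivative b = _ := derivative_sline z0 z1 x0 y0 (pderiv 0 f)
    rw [hd1, Polynomial.derivative_add, Polynomial.derivative_C_mul, e1, e2, pderiv_comm3 0 2]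
    ring
  obtain ⟨q, hq⟩ := hG
  have hGl : h * aeval g q = b ^ 2 * Polynomial.derivative (Polynomial.derivative h) +
      Polynomial.derivative h * (-2 * aeval g (pderiv 2 (pderiv 0 f)) * b
        + aeval g (pderiv 0 (pderiv 0 f)) * Polynomial.derivative h
        - 2 * Polynomial.C z1 * aeval g (pderiv 0 (pderiv 0 f)) * b) := by
    have : aeval g (flex f) = h * aeval g q := by rw [hq, map_mul]
    rw [← this, hd2, hd1]
    simp only [flex, map_add, map_sub, map_mul, map_pow, ← ha, ← hb, map_ofNat]
    ring
  have hXb : ¬ Polynomial.X ∣ b := by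
    rw [Polynomial.X_dvd_iff, hb, hev0]; exact hz
  have key : ∀ k, k ≤ f.totalDegree + 1 → Polynomial.X ^ k ∣ h := by
    intro k
    induction k with
    | zero => simp
    | succ k ih =>
      intro hk
      have ih := ih (by omega)
      suffices hc : h.coeff k = 0 by
        rw [Polynomial.X_pow_dvd_iff] at ih ⊢
        intro d hd
        rcases Nat.lt_succ_iff_lt_or_eq.1 hd with h1 | h1
        · exact ih d h1
        · rw [h1]; exact hc
      rcases k with _ | _ | k
      · rw [hh, hev0, h0]
      · have : (Polynomial.derivative h).coeff 0 = 0 := by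
          rw [hd1, Polynomial.coeff_add, Polynomial.coeff_C_mul, ha, hb, hev0, hev0, hz1]
        rw [Polynomial.coeff_derivative] at this
        simpa using this
      · have hdk : Polynomial.X ^ (k + 1) ∣ Polynomial.derivative h := by
          rw [Polynomial.X_pow_dvd_iff] at ih ⊢
          intro d hd
          rw [Polynomial.coeff_derivative, ih (d + 1) (by omega), zero_mul]
        have h3 : Polynomial.X ^ (k + 1) ∣ b ^ 2 * Polynomial.derivative (Polynomial.derivative h) := by
          rw [← dvd_add_left (dvd_mul_of_dvd_left hdk _), ← hGl]
          exact dvd_mul_of_dvd_left ((pow_dvd_pow _ (by omega)).trans ih) _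
        have h4 : Polynomial.X ^ (k + 1) ∣ Polynomial.derivative (Polynomial.derivative h) :=
          Polynomial.prime_X.pow_dvd_of_dvd_mul_left (k + 1)
            (fun hc => hXb (Polynomial.prime_X.dvd_of_dvd_pow hc)) h3
        have h5 := (Polynomial.X_pow_dvd_iff.1 h4) k (by omega)
        rw [Polynomial.coeff_derivative, Polynomial.coeff_derivative] at h5
        have hne : ∀ j : ℕ, 0 < j → j < p → (j : K) ≠ 0 := fun j hj hjp hj0 => by
          rw [CharP.cast_eq_zero_iff K p] at hj0
          exact absurd (Nat.le_of_dvd hj hj0) (by omega)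
        have e1 := hne (k + 1) (by omega) (by omega)
        have e2 := hne (k + 2) (by omega) (by omega)
        have e3 : ((k + 1 : ℕ) : K) + 1 = ((k + 2 : ℕ) : K) := by push_cast; ring
        rw [e3] at h5
        rw [Nat.cast_add, Nat.cast_one] at e1
        exact (mul_eq_zero.1 ((mul_eq_zero.1 h5).resolve_right e1)).resolve_right e2
  have hdeg : h.natDegree ≤ f.totalDegree := by
    have := MvPolynomial.aeval_natDegree_le (m := f.totalDegree) (n := 1) f le_rfl g (by
      intro i; fin_cases i
      · simp only [hg, Fin.zero_eta, Matrix.cons_val_zero]; compute_degree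
      · simp [hg]
      · simp only [hg]; simp)
    simpa using this
  have hh0 : h = 0 := by
    ext d
    by_cases hd : d ≤ f.totalDegree
    · exact (Polynomial.X_pow_dvd_iff.1 (key _ le_rfl)) d (by omega)
    · exact Polynomial.coeff_eq_zero_of_natDegree_lt (by omega)
  apply Polynomial.funext
  intro u
  rw [eval_ssub, Polynomial.eval_zero]
  have : h.eval (u - y0) = 0 := by rw [hh0, Polynomial.eval_zero]
  rw [hh, eval_aeval3] at this
  rw [← this]
  congr 2
  funext i; fin_cases i <;> simp [hg]
  ring

end RichPoints

/-! ### Ruled surfaces with two T-lines -/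

namespace RichPoints
open MvPolynomial

variable {K : Type*} [Field K]

theorem derivative_ssub (x α β : K) (f : MvPolynomial (Fin 3) K) :
    Polynomial.derivative (ssub x α β f) =
      ssub x α β (pderiv 2 f) + Polynomial.C β * ssub x α β (pderiv 0 f) := by
  have := derivative_sline α β x 0 f
  simpa [ssub] using this

theorem natCast_ne_zero_of_lt (p : ℕ) [CharP K p] (j : ℕ) (hj : 0 < j) (hjp : j < p) : (j : K) ≠ 0 := by
  intro hj0
  rw [CharP.cast_eq_zero_iff K p] at hj0
  exact absurd (Nat.le_of_dvd hj hj0) (by omega)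

/-- In characteristic larger than the degree, vanishing `z`-derivative means no dependence on `z`. -/
theorem pderiv_ne_zero (p : ℕ) [CharP K p] (f : MvPolynomial (Fin 3) K)
    (he : f.totalDegree < p) (hz : 0 < (finSuccEquiv K 2 f).natDegree) : pderiv 0 f ≠ 0 := by
  intro h0
  rw [natDegree_finSuccEquiv, degreeOf_eq_sup] at hz
  obtain ⟨m, hm, hm0⟩ := (Finset.lt_sup_iff).1 hz
  have h1 := le_totalDegree hm
  have h2 : m 0 ≤ m.sum fun _ e => e := by
    rw [Finsupp.sum_fintype _ _ (by simp), Fin.sum_univ_three]; omega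
  have h3 : coeff (m - Finsupp.single 0 1) (pderiv 0 f) = 0 := by rw [h0, coeff_zero]
  have h4 : m - Finsupp.single 0 1 + Finsupp.single 0 1 = m := by
    ext i
    by_cases hi : i = 0
    · subst hi; simp; omega
    · simp [Ne.symm hi]
  rw [coeff_pderiv, h4] at h3
  have h5 : (((m - Finsupp.single 0 1 : Fin 3 →₀ ℕ) 0 : ℕ) : K) + 1 = ((m 0 : ℕ) : K) := by
    rw [← Nat.cast_add_one]
    congr 1
    simp; omega
  rw [h5] at h3
  rcases mul_eq_zero.1 h3 with h | h
  · exact (mem_support_iff.1 hm) h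
  · exact natCast_ne_zero_of_lt p (m 0) hm0 (by omega) h

theorem flex_on_sline (x α β : K) (f : MvPolynomial (Fin 3) K) (hf : ssub x α β f = 0) :
    ssub x α β (flex f) = 0 := by
  have h1 := derivative_ssub x α β f
  have h2 := derivative_ssub x α β (pderiv 2 f)
  have h3 := derivative_ssub x α β (pderiv 0 f)
  rw [hf, Polynomial.derivative_zero] at h1
  have h4 : ssub x α β (pderiv 2 f) = - (Polynomial.C β * ssub x α β (pderiv 0 f)) := by
    linear_combination -h1
  rw [h4, Polynomial.derivative_neg, Polynomial.derivative_C_mul, h3, pderiv_comm3 0 2] at h2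
  simp only [flex, map_add, map_sub, map_mul, map_pow, map_ofNat, h4]
  linear_combination (-(ssub x α β (pderiv 0 f)) ^ 2) * h2

/-- An irreducible surface ruled by S-lines (`f ∣ flex f`) that contains two T-lines, along which
`f_z` does not vanish identically, is a quadric `z = A x y + B x + C y + D`; the conclusion records this
for the S-lines on it. The coefficients are those of the quadric swept out by the S-lines that join the
two T-lines. -/
theorem quadric_of_two [Infinite K] (p : ℕ) [CharP K p] (f : MvPolynomial (Fin 3) K)
    (hf : Irreducible f) (he : f.totalDegree < p) (hz : 0 < (finSuccEquiv K 2 f).natDegree)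
    (hG : f ∣ flex f) (y₁ γ₁ δ₁ y₂ γ₂ δ₂ : K) (hy : y₁ ≠ y₂)
    (h1 : tsub y₁ γ₁ δ₁ f = 0) (h2 : tsub y₂ γ₂ δ₂ f = 0)
    (h1z : tsub y₁ γ₁ δ₁ (pderiv 0 f) ≠ 0) (h2z : tsub y₂ γ₂ δ₂ (pderiv 0 f) ≠ 0) :
    ∃ A B C D : K, ∀ x α β, ssub x α β f = 0 → β = A * x + C ∧ α = B * x + D := by
  -- `Ψ y γ δ` vanishes on an S-line of the surface when that S-line meets the T-line `(y, γ, δ)`.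
  set Ψ : K → K → K → MvPolynomial (Fin 3) K := fun y γ δ =>
    pderiv 0 f * (X 0 - C γ - C δ * X 1) + (X 2 - C y) * pderiv 2 f with hΨ
  have hΨs : ∀ y γ δ x α β, ssub x α β (Ψ y γ δ) = ssub x α β (pderiv 0 f) *
      (Polynomial.C (α - γ - δ * x) + Polynomial.C β * Polynomial.X) +
      (Polynomial.X - Polynomial.C y) * ssub x α β (pderiv 2 f) := by
    intro y γ δ x α β
    have e0 : ssub x α β (X 0) = Polynomial.C α + Polynomial.C β * Polynomial.X := by simp [ssub]
    have e1 : ssub x α β (X 1) = Polynomial.C x := by simp [ssub]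
    have e2 : ssub x α β (X 2) = Polynomial.X := by simp [ssub]
    have e3 : ∀ a, ssub x α β (C a) = Polynomial.C a := by intro a; simp [ssub]
    simp only [hΨ, map_add, map_sub, map_mul, e0, e1, e2, e3]
    ring
  have hdvd : ∀ y γ δ, tsub y γ δ f = 0 → tsub y γ δ (pderiv 0 f) ≠ 0 → f ∣ Ψ y γ δ := by
    intro y γ δ hτ hτz
    set A : Set K := {x | (tsub y γ δ (pderiv 0 f)).eval x ≠ 0} with hA
    have hAinf : A.Infinite := by
      have hfin : Aᶜ.Finite := by
        refine (Polynomial.finite_setOfPred_isRoot hτz).subset fun x hx => ?_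
        simpa [hA] using hx
      intro hc
      exact Set.infinite_univ ((hc.union hfin).subset (by simp))
    set b : K → K := fun x => - eval ![γ + δ * x, x, y] (pderiv 2 f) / eval ![γ + δ * x, x, y] (pderiv 0 f)
    refine dvd_of_infinite_S f _ hf hz A hAinf (fun x => γ + δ * x - b x * y) b fun x hx => ?_
    have hx' : eval ![γ + δ * x, x, y] (pderiv 0 f) ≠ 0 := by rw [← eval_tsub]; exact hx
    have hs : ssub x (γ + δ * x - b x * y) (b x) f = 0 := by
      refine sline_of_flex p f he hG _ _ _ ?_ hx' _ ?_
      · rw [← eval_tsub, hτ, Polynomial.eval_zero]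
      · simp only [b]; field_simp; ring
    refine ⟨hs, ?_⟩
    have hd := derivative_ssub x (γ + δ * x - b x * y) (b x) f
    rw [hs, Polynomial.derivative_zero] at hd
    rw [hΨs]
    simp only [Polynomial.C_sub, Polynomial.C_add, Polynomial.C_mul] at hd ⊢
    linear_combination (-(Polynomial.X - Polynomial.C y)) * hd
  have hd1 := hdvd _ _ _ h1 h1z
  have hd2 := hdvd _ _ _ h2 h2z
  have hyy : y₂ - y₁ ≠ 0 := sub_ne_zero.2 hy.symm
  obtain ⟨A, hA⟩ : ∃ A, A * (y₂ - y₁) = δ₂ - δ₁ := ⟨(δ₂ - δ₁) / (y₂ - y₁), by field_simp⟩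
  obtain ⟨C', hC⟩ : ∃ A, A * (y₂ - y₁) = γ₂ - γ₁ := ⟨(γ₂ - γ₁) / (y₂ - y₁), by field_simp⟩
  set B := δ₁ - y₁ * A with hB
  set D := γ₁ - y₁ * C' with hD
  have hall : ∀ x, ssub x (B * x + D) (A * x + C') f = 0 := by
    intro x
    set P := ssub x (B * x + D) (A * x + C') f with hP
    -- For the restriction `P` of `f` to a line of the candidate quadric, `f ∣ Ψ` for both T-lines shows
    -- that `P` divides its derivative, hence is constant.
    have hd := derivative_ssub x (B * x + D) (A * x + C') f
    rw [← hP] at hd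
    have e1 : P ∣ (Polynomial.X - Polynomial.C y₁) * Polynomial.derivative P := by
      have := map_dvd (ssub x (B * x + D) (A * x + C')) hd1
      rw [hΨs] at this
      convert this using 1
      have : B * x + D - γ₁ - δ₁ * x = - (A * x + C') * y₁ := by rw [hB, hD]; ring
      rw [hd, this]
      simp only [Polynomial.C_neg, Polynomial.C_mul]
      ring
    have e2 : P ∣ (Polynomial.X - Polynomial.C y₂) * Polynomial.derivative P := by
      have := map_dvd (ssub x (B * x + D) (A * x + C')) hd2
      rw [hΨs] at this
      convert this using 1
      have : B * x + D - γ₂ - δ₂ * x = - (A * x + C') * y₂ := by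
        rw [hB, hD]; linear_combination hA * x + hC
      rw [hd, this]
      simp only [Polynomial.C_neg, Polynomial.C_mul]
      ring
    have e3 : P ∣ Polynomial.derivative P := by
      have h4 := dvd_sub e1 e2
      have h5 : (Polynomial.X - Polynomial.C y₁) * Polynomial.derivative P -
          (Polynomial.X - Polynomial.C y₂) * Polynomial.derivative P =
          Polynomial.C (y₂ - y₁) * Polynomial.derivative P := by
        rw [Polynomial.C_sub]; ring
      rw [h5] at h4
      exact ((Polynomial.isUnit_C.2 hyy.isUnit).dvd_mul_left).1 h4
    have hPd : P.natDegree < p := (natDegree_ssub_le _ _ _ f).trans_lt he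
    have hP' : Polynomial.derivative P = 0 := by
      by_contra hne
      have h6 := Polynomial.natDegree_le_of_dvd e3 hne
      by_cases h7 : P.natDegree = 0
      · rw [Polynomial.eq_C_of_natDegree_eq_zero h7, Polynomial.derivative_C] at hne
        exact hne rfl
      · have := Polynomial.natDegree_derivative_lt h7
        omega
    have hP0 : P.natDegree = 0 := by
      by_contra h7
      have h8 : (Polynomial.derivative P).coeff (P.natDegree - 1) = 0 := by
        rw [hP', Polynomial.coeff_zero]
      have h9 : P.natDegree - 1 + 1 = P.natDegree := by omega
      rw [Polynomial.coeff_derivative, h9, ← Nat.cast_add_one, h9] at h8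
      rcases mul_eq_zero.1 h8 with h | h
      · rw [Polynomial.coeff_natDegree, Polynomial.leadingCoeff_eq_zero] at h
        rw [h] at h7; simp at h7
      · exact natCast_ne_zero_of_lt p _ (by omega) hPd h
    have hroot : P.eval y₁ = 0 := by
      rw [hP, eval_ssub]
      have : B * x + D + (A * x + C') * y₁ = γ₁ + δ₁ * x := by rw [hB, hD]; ring
      rw [this, ← eval_tsub, h1, Polynomial.eval_zero]
    rw [Polynomial.eq_C_of_natDegree_eq_zero hP0, Polynomial.eval_C] at hroot
    rw [Polynomial.eq_C_of_natDegree_eq_zero hP0, hroot, Polynomial.C_0]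
  set Q : MvPolynomial (Fin 3) K := X 0 - (C A * X 1 * X 2 + C B * X 1 + C C' * X 2 + C D) with hQ
  have hQs : ∀ x α β, ssub x α β Q = Polynomial.C (α - (B * x + D)) +
      Polynomial.C (β - (A * x + C')) * Polynomial.X := by
    intro x α β
    have e0 : ssub x α β (X 0) = Polynomial.C α + Polynomial.C β * Polynomial.X := by simp [ssub]
    have e1 : ssub x α β (X 1) = Polynomial.C x := by simp [ssub]
    have e2 : ssub x α β (X 2) = Polynomial.X := by simp [ssub]
    have e3 : ∀ a, ssub x α β (C a) = Polynomial.C a := by intro a; simp [ssub]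
    simp only [hQ, map_add, map_sub, map_mul, e0, e1, e2, e3]
    ring
  have hfQ : f ∣ Q := by
    refine dvd_of_infinite_S f Q hf hz Set.univ Set.infinite_univ (fun x => B * x + D)
      (fun x => A * x + C') fun x _ => ⟨hall x, ?_⟩
    simp [hQs]
  refine ⟨A, B, C', D, fun x α β hs => ?_⟩
  obtain ⟨q, hq⟩ := hfQ
  have h3 := hQs x α β
  rw [hq, map_mul, hs, zero_mul] at h3
  have c0 := congrArg (fun P => Polynomial.coeff P 0) h3
  have c1 := congrArg (fun P => Polynomial.coeff P 1) h3
  simp at c0 c1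
  exact ⟨by linear_combination -c1, by linear_combination -c0⟩

end RichPoints

/-! ### Incidences on a surface -/

namespace RichPoints
open MvPolynomial

/-- Two families of lines in `K³`: S-lines `x = x σ`, `z = α σ + β σ y` and T-lines `y = y τ`,
`z = γ τ + δ τ x`, no two S-lines sharing their `x` and no two T-lines their `y`. The relation `J` marks
some of the incidences between them (`inc` says that the two lines meet), and `quad` says that, among the
S-lines lying on one quadric `z = A x y + B x + C y + D`, each T-line has at most `k` marked ones. -/
structure Config (K ι κ : Type*) [Field K] where
  x : ι → K
  α : ι → K
  β : ι → K
  y : κ → K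
  γ : κ → K
  δ : κ → K
  J : ι → κ → Prop
  k : ℕ
  x_inj : Function.Injective x
  y_inj : Function.Injective y
  inc : ∀ σ τ, J σ τ → α σ + β σ * y τ = γ τ + δ τ * x σ
  quad : ∀ (A B C D : K) (τ : κ) (S : Finset ι),
    (∀ σ ∈ S, J σ τ ∧ β σ = A * x σ + C ∧ α σ = B * x σ + D) → S.card ≤ k

variable {K ι κ : Type*} [Field K]

namespace Config
variable (c : Config K ι κ)

/-- Restriction to the T-line with index `τ`. -/
def ts (τ : κ) : MvPolynomial (Fin 3) K →ₐ[K] Polynomial K := tsub (c.y τ) (c.γ τ) (c.δ τ)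
/-- Restriction to the S-line with index `σ`. -/
def ss (σ : ι) : MvPolynomial (Fin 3) K →ₐ[K] Polynomial K := ssub (c.x σ) (c.α σ) (c.β σ)

/-- Number of marked incidences between `S` and `T`. -/
def N (S : Finset ι) (T : Finset κ) : ℕ := ∑ τ ∈ T, (S.filter fun σ => c.J σ τ).card

theorem eval_ss_eq {σ : ι} {τ : κ} (h : c.J σ τ) (f : MvPolynomial (Fin 3) K) :
    (c.ss σ f).eval (c.y τ) = (c.ts τ f).eval (c.x σ) := by
  rw [ss, ts, eval_ssub, eval_tsub, c.inc σ τ h]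

/-- A T-line not contained in the surface `f = 0` meets it in at most `deg f` points. -/
theorem card_T_le (S : Finset ι) (τ : κ) (f : MvPolynomial (Fin 3) K) (h : c.ts τ f ≠ 0)
    (hS : ∀ σ ∈ S, c.J σ τ ∧ c.ss σ f = 0) : S.card ≤ f.totalDegree := by
  rw [← Finset.card_image_of_injective S c.x_inj]
  refine (Polynomial.card_le_degree_of_subset_roots (p := c.ts τ f) ?_).trans
    (natDegree_tsub_le _ _ _ f)
  intro u hu
  obtain ⟨σ, hσ, rfl⟩ := Finset.mem_image.1 hu
  obtain ⟨h1, h2⟩ := hS σ hσ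
  rw [Polynomial.mem_roots h, Polynomial.IsRoot, ← c.eval_ss_eq h1, h2, Polynomial.eval_zero]

/-- An S-line not contained in the surface `f = 0` meets it in at most `deg f` points. -/
theorem card_S_le (T : Finset κ) (σ : ι) (f : MvPolynomial (Fin 3) K) (h : c.ss σ f ≠ 0)
    (hT : ∀ τ ∈ T, c.J σ τ ∧ c.ts τ f = 0) : T.card ≤ f.totalDegree := by
  rw [← Finset.card_image_of_injective T c.y_inj]
  refine (Polynomial.card_le_degree_of_subset_roots (p := c.ss σ f) ?_).trans
    (natDegree_ssub_le _ _ _ f)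
  intro u hu
  obtain ⟨τ, hτ, rfl⟩ := Finset.mem_image.1 hu
  obtain ⟨h1, h2⟩ := hT τ hτ
  rw [Polynomial.mem_roots h, Polynomial.IsRoot, c.eval_ss_eq h1, h2, Polynomial.eval_zero]

/-- On an irreducible surface of degree `e`, all but `6 e²` of the T-lines contained in it have at most
`3 e + k` marked S-lines of the surface. If the surface is not ruled by S-lines, Bezout's theorem bounds
the T-lines on which `flex f` vanishes, and any other T-line meets `flex f = 0` in at most `3 e` points.
If it is ruled, either few T-lines are left or it is a quadric. -/
theorem irreducible_case [Infinite K] (p : ℕ) [CharP K p] (f : MvPolynomial (Fin 3) K)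
    (hf : Irreducible f) (he : f.totalDegree < p) (S : Finset ι) (T : Finset κ)
    (hT : ∀ τ ∈ T, c.ts τ f = 0) :
    ∃ T' ⊆ T, T'.card ≤ 6 * f.totalDegree ^ 2 ∧
      ∀ τ ∈ T \ T', (S.filter fun σ => c.J σ τ ∧ c.ss σ f = 0).card ≤ 3 * f.totalDegree + c.k := by
  set e := f.totalDegree with hedef
  have he1 : 1 ≤ e := by
    by_contra h
    have h0 : f.totalDegree = 0 := by omega
    rw [totalDegree_eq_zero_iff_eq_C] at h0
    have h1 : coeff 0 f ≠ 0 := by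
      intro h2; rw [h2, C_0] at h0; exact hf.ne_zero h0
    apply hf.not_isUnit
    rw [h0]
    exact (isUnit_iff_ne_zero.2 h1).map C
  have hsq : e ≤ e ^ 2 := by nlinarith
  by_cases hz : (finSuccEquiv K 2 f).natDegree = 0
  · refine ⟨T, subset_rfl, ?_, by simp⟩
    set r := (finSuccEquiv K 2 f).coeff 0 with hr
    have hfr : rename Fin.succ r = f := by
      apply (finSuccEquiv K 2).injective
      rw [finSuccEquiv_rename_succ, hr]
      exact (Polynomial.eq_C_of_natDegree_eq_zero hz).symm
    have hr0 : r ≠ 0 := by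
      intro h; rw [h, map_zero] at hfr; exact hf.ne_zero hfr.symm
    have hrd : r.totalDegree ≤ e := by
      have := totalDegree_coeff_finSuccEquiv_add_le f 0 hr0
      omega
    have := card_le_of_eval_right r hr0 (T.image c.y) (by
      intro y hy x
      obtain ⟨τ, hτ, rfl⟩ := Finset.mem_image.1 hy
      have h1 : (c.ts τ f).eval x = 0 := by rw [hT τ hτ, Polynomial.eval_zero]
      rw [ts, eval_tsub, ← hfr, eval_rename] at h1
      rw [← h1]
      congr 2)
    rw [Finset.card_image_of_injective T c.y_inj] at this
    omega
  have hz' : 0 < (finSuccEquiv K 2 f).natDegree := Nat.pos_of_ne_zero hz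
  by_cases hG : f ∣ flex f
  · have hfz0 : pderiv 0 f ≠ 0 := pderiv_ne_zero p f he hz'
    have hfz : ¬ f ∣ pderiv 0 f := by
      intro h
      have h1 := totalDegree_le_of_dvd_of_isDomain h hfz0
      have h2 := totalDegree_pderiv_le 0 f
      omega
    set T1 := T.filter fun τ => c.ts τ (pderiv 0 f) = 0 with hT1
    have hT1c : T1.card ≤ 2 * e ^ 2 := by
      have h1 := bezout_T f (pderiv 0 f) hf hz' hfz T1 c.y c.γ c.δ c.y_inj.injOn (by
        intro τ hτ
        rw [hT1, Finset.mem_filter] at hτ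
        exact ⟨hT τ hτ.1, hτ.2⟩)
      have h2 := totalDegree_pderiv_le 0 f
      have h3 : f.totalDegree * (pderiv 0 f).totalDegree ≤ e * e :=
        Nat.mul_le_mul le_rfl (by omega)
      nlinarith
    by_cases hT2 : (T \ T1).card ≤ 1
    · refine ⟨T, subset_rfl, ?_, by simp⟩
      have hsub : T1 ⊆ T := Finset.filter_subset _ _
      have h1 := Finset.card_sdiff_add_card_eq_card hsub
      omega
    · refine ⟨T1, Finset.filter_subset _ _, by omega, fun τ hτ => ?_⟩
      obtain ⟨τ₁, h1, τ₂, h2, h12⟩ := Finset.one_lt_card.1 (not_le.1 hT2)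
      simp only [hT1, Finset.mem_sdiff, Finset.mem_filter, not_and] at h1 h2
      obtain ⟨A, B, C, D, hABCD⟩ := quadric_of_two p f hf he hz' hG _ _ _ _ _ _ (c.y_inj.ne h12)
        (hT τ₁ h1.1) (hT τ₂ h2.1) (h1.2 h1.1) (h2.2 h2.1)
      refine (c.quad A B C D τ _ ?_).trans (by omega)
      intro σ hσ
      rw [Finset.mem_filter] at hσ
      exact ⟨hσ.2.1, hABCD _ _ _ hσ.2.2⟩
  · set T1 := T.filter fun τ => c.ts τ (flex f) = 0 with hT1
    refine ⟨T1, Finset.filter_subset _ _, ?_, fun τ hτ => ?_⟩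
    · have h1 := bezout_T f (flex f) hf hz' hG T1 c.y c.γ c.δ c.y_inj.injOn (by
        intro τ hτ
        rw [hT1, Finset.mem_filter] at hτ
        exact ⟨hT τ hτ.1, hτ.2⟩)
      have h3 : f.totalDegree * (flex f).totalDegree ≤ e * (3 * e) :=
        Nat.mul_le_mul le_rfl (totalDegree_flex_le f)
      nlinarith
    · simp only [hT1, Finset.mem_sdiff, Finset.mem_filter, not_and] at hτ
      refine (c.card_T_le _ τ (flex f) (hτ.2 hτ.1) ?_).trans
        ((totalDegree_flex_le f).trans (by omega))
      intro σ hσ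
      rw [Finset.mem_filter] at hσ
      exact ⟨hσ.2.1, flex_on_sline _ _ _ f hσ.2.2⟩

theorem N_swap (S : Finset ι) (T : Finset κ) (P : ι → Prop) [DecidablePred P] :
    ∑ τ ∈ T, (S.filter fun σ => c.J σ τ ∧ P σ).card =
      ∑ σ ∈ S.filter P, (T.filter fun τ => c.J σ τ).card := by
  simp only [Finset.card_filter, Finset.sum_filter]
  rw [Finset.sum_comm]
  refine Finset.sum_congr rfl fun σ _ => ?_
  by_cases h : P σ <;> simp [h]

/-- Marked incidences with T-lines on an irreducible surface, counting also the S-lines that cross it. -/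
theorem irreducible_count [Infinite K] (p : ℕ) [CharP K p] (f : MvPolynomial (Fin 3) K)
    (hf : Irreducible f) (he : f.totalDegree < p) (S : Finset ι) (T : Finset κ)
    (hT : ∀ τ ∈ T, c.ts τ f = 0) :
    ∃ T' ⊆ T, T'.card ≤ 6 * f.totalDegree ^ 2 ∧
      c.N S (T \ T') ≤ (3 * f.totalDegree + c.k) * T.card + f.totalDegree * S.card := by
  obtain ⟨T', h1, h2, h3⟩ := c.irreducible_case p f hf he S T hT
  refine ⟨T', h1, h2, ?_⟩
  have h4 : c.N S (T \ T') = ∑ τ ∈ T \ T', (S.filter fun σ => c.J σ τ ∧ c.ss σ f = 0).card +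
      ∑ τ ∈ T \ T', (S.filter fun σ => c.J σ τ ∧ ¬ c.ss σ f = 0).card := by
    rw [N, ← Finset.sum_add_distrib]
    refine Finset.sum_congr rfl fun τ _ => ?_
    rw [← Finset.filter_filter, ← Finset.filter_filter, Finset.card_filter_add_card_filter_not]
  rw [h4]
  refine add_le_add ?_ ?_
  · refine (Finset.sum_le_card_nsmul _ _ _ h3).trans ?_
    rw [smul_eq_mul, mul_comm]
    exact Nat.mul_le_mul le_rfl (Finset.card_le_card Finset.sdiff_subset)
  · rw [c.N_swap S (T \ T') fun σ => ¬ c.ss σ f = 0]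
    refine (Finset.sum_le_card_nsmul _ _ f.totalDegree fun σ hσ => ?_).trans ?_
    · refine c.card_S_le _ σ f (Finset.mem_filter.1 hσ).2 fun τ hτ => ?_
      rw [Finset.mem_filter, Finset.mem_sdiff] at hτ
      exact ⟨hτ.2, hT τ hτ.1.1⟩
    · rw [smul_eq_mul, mul_comm]
      exact Nat.mul_le_mul le_rfl (Finset.card_le_card (Finset.filter_subset _ _))

theorem N_mono {S : Finset ι} {T T' : Finset κ} (h : T ⊆ T') : c.N S T ≤ c.N S T' :=
  Finset.sum_le_sum_of_subset h

theorem N_union (S : Finset ι) (T T' : Finset κ) : c.N S (T ∪ T') ≤ c.N S T + c.N S T' := by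
  unfold N
  rw [← Finset.sum_union_inter]
  exact Nat.le_add_right _ _

/-- The bound of `irreducible_count` is additive over the irreducible factors of `f`. -/
theorem poly_count [Infinite K] (p : ℕ) [CharP K p] (S : Finset ι) (f : MvPolynomial (Fin 3) K) :
    f ≠ 0 → f.totalDegree < p → ∀ T : Finset κ, (∀ τ ∈ T, c.ts τ f = 0) →
    ∃ T' ⊆ T, T'.card ≤ 6 * f.totalDegree ^ 2 ∧
      c.N S (T \ T') ≤ (3 * f.totalDegree + c.k) * T.card + f.totalDegree * S.card := by
  induction f using UniqueFactorizationMonoid.induction_on_prime with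
  | h₁ => intro h; exact absurd rfl h
  | h₂ u hu =>
    intro _ _ T hT
    have hTe : T = ∅ := by
      refine Finset.eq_empty_of_forall_notMem fun τ hτ => ?_
      have := hu.map (c.ts τ)
      rw [hT τ hτ] at this
      exact not_isUnit_zero this
    exact ⟨∅, by simp, by simp, by simp [hTe, N]⟩
  | h₃ g q hg hq ih =>
    intro hne hd T hT
    rw [totalDegree_mul_of_isDomain hq.ne_zero hg] at hd ⊢
    obtain ⟨T1, h1, h2, h3⟩ := c.irreducible_count p q hq.irreducible (by omega) S
      (T.filter fun τ => c.ts τ q = 0) (by simp)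
    obtain ⟨T2, h4, h5, h6⟩ := ih hg (by omega) (T.filter fun τ => ¬ c.ts τ q = 0) (by
      intro τ hτ
      rw [Finset.mem_filter] at hτ
      have := hT τ hτ.1
      rw [map_mul] at this
      exact (mul_eq_zero.1 this).resolve_left hτ.2)
    refine ⟨T1 ∪ T2, Finset.union_subset (h1.trans (Finset.filter_subset _ _))
      (h4.trans (Finset.filter_subset _ _)), ?_, ?_⟩
    · have := Finset.card_union_le T1 T2
      nlinarith
    · have h7 : T \ (T1 ∪ T2) ⊆ ((T.filter fun τ => c.ts τ q = 0) \ T1) ∪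
          ((T.filter fun τ => ¬ c.ts τ q = 0) \ T2) := by
        intro τ hτ
        simp only [Finset.mem_sdiff, Finset.mem_union, Finset.mem_filter, not_or] at hτ ⊢
        tauto
      have h8 := (c.N_mono (S := S) h7).trans (c.N_union _ _ _)
      have h9 := Finset.card_filter_add_card_filter_not (s := T) (fun τ => c.ts τ q = 0)
      rw [← h9]
      nlinarith
end Config
end RichPoints

/-! ### The incidence bound by the polynomial method -/

namespace RichPoints
open MvPolynomial
variable {K ι κ : Type*} [Field K]

namespace Config
variable (c : Config K ι κ)

/-- Parameter counting: `D³` coefficients against at most `3 D` conditions for each S-line. -/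
theorem exists_poly (S : Finset ι) (D : ℕ) (hD : 3 * D * S.card < D ^ 3) :
    ∃ f : MvPolynomial (Fin 3) K, f ≠ 0 ∧ f.totalDegree < 3 * D ∧ ∀ σ ∈ S, c.ss σ f = 0 := by
  have hD0 : 0 < D := by
    rcases Nat.eq_zero_or_pos D with h | h
    · subst h; simp at hD
    · exact h
  let E : (Fin 3 → Fin D) → (Fin 3 →₀ ℕ) := fun e => Finsupp.equivFunOnFinite.symm fun i => (e i : ℕ)
  have hE : Function.Injective E := by
    intro a b h
    funext i
    have := DFunLike.congr_fun h i
    simpa [E, Fin.ext_iff] using this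
  let F : ((Fin 3 → Fin D) → K) →ₗ[K] MvPolynomial (Fin 3) K :=
    Fintype.linearCombination K (fun e => monomial (E e) (1 : K))
  have hF : ∀ a, F a = ∑ e, monomial (E e) (a e) := by
    intro a
    simp [F, Fintype.linearCombination_apply, smul_monomial]
  have hFd : ∀ a, (F a).totalDegree < 3 * D := by
    intro a
    have : (F a).totalDegree ≤ 3 * (D - 1) := by
      rw [hF]
      refine totalDegree_finsetSum_le fun e _ => ?_
      refine (totalDegree_monomial_le _ _).trans ?_
      rw [Finsupp.sum_fintype _ _ (by simp), Fin.sum_univ_three]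
      have h0 := (e 0).2
      have h1 := (e 1).2
      have h2 := (e 2).2
      simp only [E, Finsupp.coe_equivFunOnFinite_symm, id]
      omega
    omega
  let Φ : ((Fin 3 → Fin D) → K) →ₗ[K] (S × Fin (3 * D) → K) :=
    LinearMap.pi fun q => (Polynomial.lcoeff K (q.2 : ℕ)).comp ((c.ss q.1).toLinearMap.comp F)
  have hker : Φ.ker ≠ ⊥ := by
    apply LinearMap.ker_ne_bot_of_finrank_lt
    simp only [Module.finrank_fintype_fun_eq_card, Fintype.card_prod, Fintype.card_fun, Fintype.card_fin,
      Fintype.card_coe]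
    linarith [mul_comm S.card (3 * D)]
  obtain ⟨a, ha, ha0⟩ := (Submodule.ne_bot_iff _).1 hker
  refine ⟨F a, ?_, hFd a, ?_⟩
  · intro h0
    apply ha0
    funext e
    have h1 : coeff (E e) (F a) = a e := by
      rw [hF, coeff_sum]
      simp [coeff_monomial, hE.eq_iff]
    rw [← h1, h0]; simp
  · intro σ hσ
    ext j
    by_cases hj : j < 3 * D
    · have := congrFun (LinearMap.mem_ker.1 ha) (⟨σ, hσ⟩, ⟨j, hj⟩)
      simpa [Φ] using this
    · rw [Polynomial.coeff_zero]
      refine Polynomial.coeff_eq_zero_of_natDegree_lt ?_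
      have := natDegree_ssub_le (c.x σ) (c.α σ) (c.β σ) (F a)
      have := hFd a
      rw [ss]; omega

/-- A bound for all sets of at most `m` S-lines is additive under splitting a larger set into pieces. -/
theorem N_split (T : Finset κ) (m X : ℕ) (hX : ∀ A : Finset ι, A.card ≤ m → c.N A T ≤ X) :
    ∀ (n : ℕ) (S : Finset ι), S.card ≤ n * m → c.N S T ≤ n * X := by
  intro n
  induction n with
  | zero =>
    intro S hS
    have : S = ∅ := by simpa using hS
    simp [this, N]
  | succ n ih =>
    intro S hS
    obtain ⟨A, hA, hAc⟩ := Finset.exists_subset_card_eq (min_le_right m S.card)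
    have h1 := hX A (by omega)
    have h2 := ih (S \ A) (by
      rw [Finset.card_sdiff_of_subset hA, hAc]
      rw [Nat.succ_mul] at hS
      have : m ≤ S.card ∨ S.card ≤ m := le_total _ _
      omega)
    have h3 : c.N S T ≤ c.N A T + c.N (S \ A) T := by
      unfold N
      rw [← Finset.sum_add_distrib]
      refine Finset.sum_le_sum fun τ _ => ?_
      refine le_trans (Finset.card_le_card ?_) (Finset.card_union_le _ _)
      intro σ hσ
      simp only [Finset.mem_union, Finset.mem_filter, Finset.mem_sdiff] at hσ ⊢
      tauto
    rw [Nat.succ_mul]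
    omega

/-- The incidence bound `N(S, T) ≲ 2^r |T| + 8^r + k (|T| + r 4^r)` for `|S| ≤ 4^r`, valid as long as
the degrees that occur stay below the characteristic. By induction on `r`: split `S` into four pieces of
size `4^(r-1)`, take a polynomial of degree at most `6 * 2^(r-1)` vanishing on one piece, and apply
`poly_count`; the `O(4^r)` exceptional T-lines are handled by the induction hypothesis. -/
theorem main_count [Infinite K] (p : ℕ) [CharP K p] (r : ℕ) : 3 * 2 ^ r ≤ p →
    ∀ (S : Finset ι) (T : Finset κ), S.card ≤ 4 ^ r →
    c.N S T ≤ 48 * 2 ^ r * T.card + 10374 * 8 ^ r + 4 * c.k * T.card + 864 * c.k * r * 4 ^ r := by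
  induction r with
  | zero =>
    intro _ S T hS
    have : c.N S T ≤ T.card * 1 := by
      refine Finset.sum_le_card_nsmul _ _ _ fun τ _ => ?_
      exact (Finset.card_le_card (Finset.filter_subset _ _)).trans (by simpa using hS)
    simp only [pow_zero]
    nlinarith [Nat.zero_le (4 * c.k * T.card)]
  | succ r ih =>
    intro hp S T hS
    set M := 2 ^ r with hM
    have hM0 : 1 ≤ M := Nat.one_le_two_pow
    have h4 : 4 ^ r = M ^ 2 := by rw [hM, ← pow_mul, mul_comm, pow_mul]; norm_num
    have h8 : 8 ^ r = M ^ 3 := by rw [hM, ← pow_mul, mul_comm, pow_mul]; norm_num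
    have hpM : 6 * M ≤ p := by rw [pow_succ] at hp; omega
    have key := c.N_split T (M ^ 2) (24 * M * T.card + c.k * T.card + 6 * M ^ 3 +
      (48 * M * (216 * M ^ 2) + 10374 * M ^ 3 + 4 * c.k * (216 * M ^ 2) + 864 * c.k * r * M ^ 2))
      (by
        intro A hA
        obtain ⟨f, hf0, hfd, hfA⟩ := c.exists_poly A (2 * M) (by
          have : 3 * (2 * M) * A.card ≤ 3 * (2 * M) * M ^ 2 := Nat.mul_le_mul le_rfl hA
          have h1 : 0 < M ^ 3 := by positivity
          nlinarith)
        have hfd' : f.totalDegree ≤ 6 * M := by omega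
        obtain ⟨T', h1, h2, h3⟩ := c.poly_count p A f hf0 (by omega)
          (T.filter fun τ => c.ts τ f = 0) (by simp)
        have hT1 : (T.filter fun τ => c.ts τ f = 0).card + (T.filter fun τ => ¬ c.ts τ f = 0).card
          = T.card := Finset.card_filter_add_card_filter_not (s := T) (fun τ => c.ts τ f = 0)
        set Tf := T.filter fun τ => c.ts τ f = 0 with hTf
        set Tn := T.filter fun τ => ¬ c.ts τ f = 0 with hTn
        have e1 : c.N A Tn ≤ Tn.card * (6 * M) := by
          refine Finset.sum_le_card_nsmul _ _ _ fun τ hτ => ?_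
          rw [hTn, Finset.mem_filter] at hτ
          refine (c.card_T_le _ τ f hτ.2 ?_).trans hfd'
          intro σ hσ
          rw [Finset.mem_filter] at hσ
          exact ⟨hσ.2, hfA σ hσ.1⟩
        have hT'c : T'.card ≤ 216 * M ^ 2 := by
          have : f.totalDegree ^ 2 ≤ (6 * M) ^ 2 := Nat.pow_le_pow_left hfd' 2
          nlinarith
        have e2 := ih (by omega) A T' (by rw [h4]; exact hA)
        rw [h4, h8] at e2
        have e2' : c.N A T' ≤ 48 * M * (216 * M ^ 2) + 10374 * M ^ 3 + 4 * c.k * (216 * M ^ 2)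
            + 864 * c.k * r * M ^ 2 := by
          refine e2.trans ?_
          gcongr
        have e3 : c.N A (Tf \ T') ≤ (18 * M + c.k) * Tf.card + 6 * M * M ^ 2 := by
          have : 3 * f.totalDegree ≤ 18 * M := by omega
          exact h3.trans (by gcongr)
        have e4 : c.N A T ≤ c.N A Tn + (c.N A (Tf \ T') + c.N A T') := by
          refine le_trans (c.N_mono ?_) ((c.N_union A Tn ((Tf \ T') ∪ T')).trans
            (Nat.add_le_add_left (c.N_union _ _ _) _))
          intro τ hτ
          simp only [hTn, hTf, Finset.mem_union, Finset.mem_sdiff, Finset.mem_filter]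
          tauto
        have e5 : Tn.card * (6 * M) + (18 * M + c.k) * Tf.card ≤ 24 * M * T.card + c.k * T.card := by
          rw [← hT1]; nlinarith [Nat.zero_le (M * Tn.card), Nat.zero_le (M * Tf.card),
            Nat.zero_le (c.k * Tn.card)]
        have e6 : 6 * M * M ^ 2 = 6 * M ^ 3 := by ring
        omega) 4 S (by rw [pow_succ, h4] at hS; omega)
    refine key.trans (le_of_eq ?_)
    rw [pow_succ 2 r, pow_succ 4 r, pow_succ 8 r, h4, h8]
    ring

end Config
end RichPoints

/-! ### The twisted line configuration of a grid -/

namespace RichPoints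

section Grid
variable {p : ℕ} [Fact p.Prime]

/-- The field `F_p(λ)`. -/
abbrev KK (p : ℕ) [Fact p.Prime] := FractionRing (Polynomial (ZMod p))

/-- The generic element `λ`. -/
def lam (p : ℕ) [Fact p.Prime] : KK p := algebraMap (Polynomial (ZMod p)) (KK p) Polynomial.X

/-- The embedding of the constants. -/
def cst (p : ℕ) [Fact p.Prime] : ZMod p →+* KK p :=
  (algebraMap (Polynomial (ZMod p)) (KK p)).comp Polynomial.C

instance : CharP (KK p) p := by
  have : CharP (Polynomial (ZMod p)) p := inferInstance
  exact charP_of_injective_algebraMap (IsFractionRing.injective (Polynomial (ZMod p)) (KK p)) p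

instance : Infinite (KK p) :=
  Infinite.of_injective _ (IsFractionRing.injective (Polynomial (ZMod p)) (KK p))

/-- Powers of `λ` are linearly independent over the constants. -/
theorem lam_coeffs {n : ℕ} (a b : Fin n → ZMod p)
    (h : ∑ i, cst p (a i) * lam p ^ (i : ℕ) = ∑ i, cst p (b i) * lam p ^ (i : ℕ)) : a = b := by
  have h1 : ∀ a : Fin n → ZMod p, ∑ i, cst p (a i) * lam p ^ (i : ℕ) =
      algebraMap (Polynomial (ZMod p)) (KK p)
        (∑ i, Polynomial.C (a i) * Polynomial.X ^ (i : ℕ)) := by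
    intro a
    simp [cst, lam]
  rw [h1, h1] at h
  have h2 := IsFractionRing.injective (Polynomial (ZMod p)) (KK p) h
  funext j
  have h3 := congrArg (fun P => Polynomial.coeff P (j : ℕ)) h2
  simpa [Polynomial.finsetSum_coeff, Polynomial.coeff_X_pow, Fin.val_inj] using h3

theorem cst_inj : Function.Injective (cst p) := (cst p).injective

theorem one_add_ne (m : ZMod p) (j : ℕ) (hj : 0 < j) (hj3 : j < 4) : 1 + lam p ^ j * cst p m ≠ 0 := by
  intro h
  have := lam_coeffs (p := p) (n := 4) (Function.update (fun i => if (i : ℕ) = j then m else 0) 0 1) 0 (by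
    rw [Fin.sum_univ_four, Fin.sum_univ_four]
    interval_cases j <;> simp at h ⊢ <;> linear_combination h)
  have h0 := congrFun this 0
  simp at h0

/-- The linear algebra behind the field `quad` of `gridConfig`: if three twisted S-lines lie on one
quadric, the first two being distinct with equal parameter `a`, then the vector `(a, m, c, 1)` of the third
is a combination of the other two, so it has the same `a`. -/
theorem quad_aux (A B C D : KK p) (a m c : Fin 3 → ZMod p)
    (ha : a 0 = a 1)
    (h2 : ∀ i, cst p (m i) = A * (cst p (a i) + lam p * cst p (m i) + lam p ^ 2 * cst p (c i)) +
      C * (1 + lam p ^ 3 * cst p (m i)))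
    (h3 : ∀ i, cst p (c i) = B * (cst p (a i) + lam p * cst p (m i) + lam p ^ 2 * cst p (c i)) +
      D * (1 + lam p ^ 3 * cst p (m i)))
    (hd : (cst p (a 0) + lam p * cst p (m 0) + lam p ^ 2 * cst p (c 0)) * (1 + lam p ^ 3 * cst p (m 1)) -
      (cst p (a 1) + lam p * cst p (m 1) + lam p ^ 2 * cst p (c 1)) * (1 + lam p ^ 3 * cst p (m 0)) ≠ 0) :
    a 2 = a 0 := by
  set q1 : Fin 3 → KK p := fun i => cst p (a i) + lam p * cst p (m i) + lam p ^ 2 * cst p (c i) with hq1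
  set q4 : Fin 3 → KK p := fun i => 1 + lam p ^ 3 * cst p (m i) with hq4
  set d := q1 0 * q4 1 - q1 1 * q4 0 with hdd
  have hd' : d ≠ 0 := hd
  set s := q1 2 * q4 1 - q1 1 * q4 2
  set s' := q1 0 * q4 2 - q1 2 * q4 0
  have e1 : d * q1 2 = s * q1 0 + s' * q1 1 := by simp only [d, s, s']; ring
  have e4 : d * q4 2 = s * q4 0 + s' * q4 1 := by simp only [d, s, s']; ring
  have h2' : ∀ i, cst p (m i) = A * q1 i + C * q4 i := h2
  have h3' : ∀ i, cst p (c i) = B * q1 i + D * q4 i := h3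
  have e2 : d * cst p (m 2) = s * cst p (m 0) + s' * cst p (m 1) := by
    rw [h2' 0, h2' 1, h2' 2]; linear_combination A * e1 + C * e4
  have e3 : d * cst p (c 2) = s * cst p (c 0) + s' * cst p (c 1) := by
    rw [h3' 0, h3' 1, h3' 2]; linear_combination B * e1 + D * e4
  have e5 : d = s + s' := by
    have : ∀ i, (1 : KK p) = q4 i - lam p ^ 3 * cst p (m i) := by intro i; simp [hq4]
    have i0 := this 0
    have i1 := this 1
    have i2 := this 2
    linear_combination e4 - lam p ^ 3 * e2 + d * i2 - s * i0 - s' * i1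
  have e6 : d * cst p (a 2) = s * cst p (a 0) + s' * cst p (a 1) := by
    have : ∀ i, cst p (a i) = q1 i - lam p * cst p (m i) - lam p ^ 2 * cst p (c i) := by
      intro i; simp only [hq1]; ring
    have i0 := this 0
    have i1 := this 1
    have i2 := this 2
    linear_combination e1 - lam p * e2 - lam p ^ 2 * e3 + d * i2 - s * i0 - s' * i1
  rw [← ha, ← add_mul, ← e5] at e6
  exact cst_inj (mul_left_cancel₀ hd' e6)

/-- The `x`-parameter of the S-line attached to `(a, m, c)`. The S-line `x = a`, `z = c + m y` does not
determine itself by its `x`; the generic linear change of line coordinates used here makes `x` injective. -/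
def gx (σ : ZMod p × ZMod p × ZMod p) : KK p :=
  (cst p σ.1 + lam p * cst p σ.2.1 + lam p ^ 2 * cst p σ.2.2) / (1 + lam p ^ 3 * cst p σ.2.1)

/-- The `y`-parameter of the T-line attached to `(a', m', c')`, twisted so as to preserve, together with
`gx`, the incidence relation `c + m a' = c' + m' a`. -/
def gy (τ : ZMod p × ZMod p × ZMod p) : KK p :=
  (cst p τ.1 + lam p * cst p τ.2.1 + lam p ^ 3 * cst p τ.2.2) / (1 + lam p ^ 2 * cst p τ.2.1)

theorem gx_inj : Function.Injective (gx (p := p)) := by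
  rintro ⟨a, m, c⟩ ⟨a', m', c'⟩ h
  simp only [gx] at h
  rw [div_eq_div_iff (one_add_ne _ 3 (by omega) (by omega)) (one_add_ne _ 3 (by omega) (by omega))] at h
  have := lam_coeffs (p := p) ![a, m, c, a * m', m * m', c * m'] ![a', m', c', a' * m, m' * m, c' * m] (by
    simp [Fin.sum_univ_succ]
    linear_combination h)
  have h0 := congrFun this 0
  have h1 := congrFun this 1
  have h2 := congrFun this 2
  simp at h0 h1 h2
  simp [h0, h1, h2]

theorem gy_inj : Function.Injective (gy (p := p)) := by
  rintro ⟨a, m, c⟩ ⟨a', m', c'⟩ h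
  simp only [gy] at h
  rw [div_eq_div_iff (one_add_ne _ 2 (by omega) (by omega)) (one_add_ne _ 2 (by omega) (by omega))] at h
  have := lam_coeffs (p := p) ![a, m, a * m', c + m * m', 0, c * m'] ![a', m', a' * m, c' + m' * m, 0, c' * m] (by
    simp [Fin.sum_univ_succ]
    linear_combination h)
  have h0 := congrFun this 0
  have h1 := congrFun this 1
  have h3 := congrFun this 3
  simp at h0 h1 h3
  rw [h1] at h3
  simp [h0, h1]
  linear_combination h3

/-- The configuration attached to a set of incidences `J0` between points `(a, b)` of the plane and
lines `b = m a + c`, the line being encoded as `(m, c)`. An S-line `(a, m, c)` and a T-line `(a', m', c')`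
are marked when some `b` makes `(a', b)` incident to `(m, c)` and `(a, b)` incident to `(m', c')`; before
the twist this says that `x = a, z = c + m y` and `y = a', z = c' + m' x` meet at `(a, a', b)`. -/
def gridConfig (J0 : ZMod p × ZMod p → ZMod p × ZMod p → Prop) (A : Finset (ZMod p))
    (Λ : Finset (ZMod p × ZMod p)) (t : ℕ)
    (hinc : ∀ x l, J0 x l → x.2 = l.1 * x.1 + l.2) (hA : ∀ x l, J0 x l → x.1 ∈ A)
    (hΛ : ∀ x l, J0 x l → l ∈ Λ)
    (hAt : A.card ≤ t) (hdeg : ∀ x, (Λ.filter (J0 x)).card ≤ t) :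
    Config (KK p) (ZMod p × ZMod p × ZMod p) (ZMod p × ZMod p × ZMod p) where
  x := gx
  α := fun σ => cst p σ.2.2 / (1 + lam p ^ 3 * cst p σ.2.1)
  β := fun σ => cst p σ.2.1 / (1 + lam p ^ 3 * cst p σ.2.1)
  y := gy
  γ := fun τ => cst p τ.2.2 / (1 + lam p ^ 2 * cst p τ.2.1)
  δ := fun τ => cst p τ.2.1 / (1 + lam p ^ 2 * cst p τ.2.1)
  J := fun σ τ => ∃ b, J0 (τ.1, b) σ.2 ∧ J0 (σ.1, b) τ.2
  k := t
  x_inj := gx_inj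
  y_inj := gy_inj
  inc := by
    rintro ⟨a, m, c⟩ ⟨a', m', c'⟩ ⟨b, h1, h2⟩
    have e1 := hinc _ _ h1
    have e2 := hinc _ _ h2
    simp only at e1 e2 ⊢
    have e3 : cst p m * cst p a' + cst p c = cst p m' * cst p a + cst p c' := by
      rw [← map_mul, ← map_mul, ← map_add, ← map_add, ← e1, ← e2]
    have n1 := one_add_ne (p := p) m 3 (by omega) (by omega)
    have n2 := one_add_ne (p := p) m' 2 (by omega) (by omega)
    simp only [gx, gy]
    rw [div_mul_div_comm, div_mul_div_comm, div_add_div _ _ n1 (mul_ne_zero n1 n2),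
      div_add_div _ _ n2 (mul_ne_zero n2 n1),
      div_eq_div_iff (mul_ne_zero n1 (mul_ne_zero n1 n2)) (mul_ne_zero n2 (mul_ne_zero n2 n1))]
    linear_combination (1 + lam p ^ 3 * cst p m) ^ 2 * (1 + lam p ^ 2 * cst p m') ^ 2 * e3
  quad := by
    intro A' B C D τ Q hQ
    -- On a quadric, either the S-lines have distinct `a`, or all of them have the same `a`; in the second
    -- case the marked ones come from lines through one common point.
    by_cases hinj : Set.InjOn (fun σ : ZMod p × ZMod p × ZMod p => σ.1) Q
    · rw [← Finset.card_image_of_injOn hinj]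
      refine (Finset.card_le_card ?_).trans hAt
      intro a ha
      obtain ⟨σ, hσ, rfl⟩ := Finset.mem_image.1 ha
      obtain ⟨⟨b, -, h⟩, -⟩ := hQ σ hσ
      exact hA _ _ h
    · simp only [Set.InjOn, not_forall] at hinj
      obtain ⟨σ₀, h0, σ₁, h1, h01, hne⟩ := hinj
      have hlin : ∀ σ ∈ Q, cst p σ.2.1 = A' * (cst p σ.1 + lam p * cst p σ.2.1 + lam p ^ 2 * cst p σ.2.2) +
          C * (1 + lam p ^ 3 * cst p σ.2.1) ∧
          cst p σ.2.2 = B * (cst p σ.1 + lam p * cst p σ.2.1 + lam p ^ 2 * cst p σ.2.2) +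
          D * (1 + lam p ^ 3 * cst p σ.2.1) := by
        intro σ hσ
        obtain ⟨-, e1, e2⟩ := hQ σ hσ
        have n1 := one_add_ne (p := p) σ.2.1 3 (by omega) (by omega)
        simp only [gx] at e1 e2
        rw [mul_div_assoc', div_add' _ _ _ n1, div_left_inj' n1] at e1 e2
        exact ⟨e1, e2⟩
      have hd : (cst p σ₀.1 + lam p * cst p σ₀.2.1 + lam p ^ 2 * cst p σ₀.2.2) * (1 + lam p ^ 3 * cst p σ₁.2.1) -
          (cst p σ₁.1 + lam p * cst p σ₁.2.1 + lam p ^ 2 * cst p σ₁.2.2) * (1 + lam p ^ 3 * cst p σ₀.2.1) ≠ 0 := by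
        intro h
        apply hne
        apply gx_inj
        simp only [gx]
        rw [div_eq_div_iff (one_add_ne _ 3 (by omega) (by omega)) (one_add_ne _ 3 (by omega) (by omega))]
        exact sub_eq_zero.1 h
      have hconst : ∀ σ ∈ Q, σ.1 = σ₀.1 := by
        intro σ hσ
        have := quad_aux A' B C D ![σ₀.1, σ₁.1, σ.1] ![σ₀.2.1, σ₁.2.1, σ.2.1] ![σ₀.2.2, σ₁.2.2, σ.2.2]
          h01 (by
            intro i; fin_cases i
            · exact (hlin σ₀ h0).1
            · exact (hlin σ₁ h1).1
            · exact (hlin σ hσ).1) (by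
            intro i; fin_cases i
            · exact (hlin σ₀ h0).2
            · exact (hlin σ₁ h1).2
            · exact (hlin σ hσ).2) hd
        exact this
      refine le_trans ?_ (hdeg (τ.1, τ.2.1 * σ₀.1 + τ.2.2))
      refine Finset.card_le_card_of_injOn (fun σ => σ.2) ?_ ?_
      · intro σ hσ
        obtain ⟨⟨b, hb1, hb2⟩, -⟩ := hQ σ hσ
        have hb := hinc _ _ hb2
        simp only [hconst σ hσ] at hb
        simp only [Finset.coe_filter, Set.mem_ofPred_eq]
        rw [← hb]
        exact ⟨hΛ _ _ hb1, hb1⟩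
      · intro σ hσ σ' hσ' h
        exact Prod.ext ((hconst σ hσ).trans (hconst σ' hσ').symm) h

end Grid
end RichPoints

/-! ### Rich points in a grid -/

namespace RichPoints
section Grid
variable {p : ℕ} [Fact p.Prime]

/-- Cauchy–Schwarz over the second coordinate. -/
theorem sq_card_le_fiber {F : Type*} [DecidableEq F] (G : Finset (F × F)) (B : Finset F)
    (hB : ∀ x ∈ G, x.2 ∈ B) :
    G.card ^ 2 ≤ B.card * ((G ×ˢ G).filter fun q => q.1.2 = q.2.2).card := by
  have h1 : G.card = ∑ b ∈ B, (G.filter fun x => x.2 = b).card :=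
    Finset.card_eq_sum_card_fiberwise hB
  have h2 : ((G ×ˢ G).filter fun q => q.1.2 = q.2.2).card =
      ∑ b ∈ B, (G.filter fun x => x.2 = b).card ^ 2 := by
    rw [Finset.card_eq_sum_card_fiberwise (f := fun q => q.1.2) (t := B)]
    · refine Finset.sum_congr rfl fun b _ => ?_
      rw [sq, ← Finset.card_product]
      congr 1
      ext q
      simp only [Finset.mem_filter, Finset.mem_product]
      constructor
      · rintro ⟨⟨⟨h1, h2⟩, h3⟩, h4⟩
        exact ⟨⟨h1, h4⟩, h2, h3 ▸ h4⟩
      · rintro ⟨⟨h1, h4⟩, h2, h5⟩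
        exact ⟨⟨⟨h1, h2⟩, h4.trans h5.symm⟩, h4⟩
    · intro q hq
      simp only [Finset.coe_filter, Set.mem_ofPred_eq, Finset.mem_product] at hq
      exact hB _ hq.1.1
  rw [h2, h1]
  exact sq_sum_le_card_mul_sum_sq

/-- Points of a `t × t` grid, each incident to between `D` and `t` lines of `Λ`. Pairs of points of
`G` with equal second coordinate, together with a line through each, inject into the marked incidences of
`gridConfig`. -/
theorem grid_count (J0 : ZMod p × ZMod p → ZMod p × ZMod p → Prop) (A B : Finset (ZMod p))
    (Λ G : Finset (ZMod p × ZMod p)) (t D r : ℕ)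
    (hinc : ∀ x l, J0 x l → x.2 = l.1 * x.1 + l.2) (hG : ∀ x l, J0 x l → x ∈ G)
    (hΛ : ∀ x l, J0 x l → l ∈ Λ) (hA : ∀ x ∈ G, x.1 ∈ A) (hB : ∀ x ∈ G, x.2 ∈ B)
    (hAt : A.card ≤ t) (hBt : B.card ≤ t) (hdeg : ∀ x, (Λ.filter (J0 x)).card ≤ t)
    (hlow : ∀ x ∈ G, D ≤ (Λ.filter (J0 x)).card) (hr : t * Λ.card ≤ 4 ^ r) (hp : 3 * 2 ^ r ≤ p) :
    D ^ 2 * G.card ^ 2 ≤ t * (10422 * 8 ^ r + 4 * t * 4 ^ r + 864 * t * r * 4 ^ r) := by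
  set c := gridConfig J0 A Λ t hinc (fun x l h => hA x (hG x l h)) hΛ hAt hdeg with hc
  have hS : (A ×ˢ Λ).card ≤ 4 ^ r := by
    rw [Finset.card_product]
    exact (Nat.mul_le_mul_right _ hAt).trans hr
  have h1 := c.main_count p r hp (A ×ˢ Λ) (A ×ˢ Λ) hS
  have hk : c.k = t := rfl
  rw [hk] at h1
  have h2 : c.N (A ×ˢ Λ) (A ×ˢ Λ) ≤ 10422 * 8 ^ r + 4 * t * 4 ^ r + 864 * t * r * 4 ^ r := by
    refine h1.trans ?_
    have e1 : 48 * 2 ^ r * (A ×ˢ Λ).card ≤ 48 * 2 ^ r * 4 ^ r := Nat.mul_le_mul_left _ hS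
    have e2 : 4 * t * (A ×ˢ Λ).card ≤ 4 * t * 4 ^ r := Nat.mul_le_mul_left _ hS
    have e3 : 48 * 2 ^ r * 4 ^ r = 48 * 8 ^ r := by
      rw [mul_assoc, ← mul_pow]; norm_num
    omega
  set E := (G ×ˢ G).filter fun q => q.1.2 = q.2.2 with hE
  have h3 : E.card * D ^ 2 ≤ c.N (A ×ˢ Λ) (A ×ˢ Λ) := by
    have e1 : E.card * D ^ 2 ≤ (E.sigma fun q => (Λ.filter (J0 q.1)) ×ˢ (Λ.filter (J0 q.2))).card := by
      rw [Finset.card_sigma, ← smul_eq_mul]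
      refine Finset.card_nsmul_le_sum _ _ _ fun q hq => ?_
      rw [hE, Finset.mem_filter, Finset.mem_product] at hq
      rw [Finset.card_product, sq]
      exact Nat.mul_le_mul (hlow _ hq.1.1) (hlow _ hq.1.2)
    refine e1.trans ?_
    have e2 : c.N (A ×ˢ Λ) (A ×ˢ Λ) =
      ((A ×ˢ Λ).sigma fun τ => (A ×ˢ Λ).filter fun σ => c.J σ τ).card := by
      rw [Finset.card_sigma]; rfl
    rw [e2]
    refine Finset.card_le_card_of_injOn
      (fun w => ⟨(w.1.1.1, w.2.2), (w.1.2.1, w.2.1)⟩) ?_ ?_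
    · rintro ⟨⟨x, x'⟩, ⟨l, l'⟩⟩ hw
      simp only [Finset.coe_sigma, Set.mem_sigma_iff, Finset.mem_coe, hE, Finset.mem_filter,
        Finset.mem_product] at hw ⊢
      obtain ⟨⟨⟨hx, hx'⟩, hb⟩, ⟨hl, hxl⟩, hl', hxl'⟩ := hw
      refine ⟨⟨hA _ hx, hl'⟩, ⟨hA _ hx', hl⟩, ⟨x.2, hxl, ?_⟩⟩
      rw [hb]
      exact hxl'
    · rintro ⟨⟨x, x'⟩, ⟨l, l'⟩⟩ hw ⟨⟨y, y'⟩, ⟨m, m'⟩⟩ hw' h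
      simp only [Finset.coe_sigma, Set.mem_sigma_iff, Finset.mem_coe, hE, Finset.mem_filter,
        Finset.mem_product] at hw hw'
      obtain ⟨-, ⟨-, hxl⟩, -, hxl'⟩ := hw
      obtain ⟨-, ⟨-, hym⟩, -, hym'⟩ := hw'
      simp only [Sigma.mk.injEq, Prod.mk.injEq, heq_eq_eq] at h
      obtain ⟨⟨a1, a2⟩, a3, a4⟩ := h
      subst a2 a4
      have b1 : x = y := by
        refine Prod.ext a1 ?_
        rw [hinc _ _ hxl, hinc _ _ hym, a1]
      have b2 : x' = y' := by
        refine Prod.ext a3 ?_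
        rw [hinc _ _ hxl', hinc _ _ hym', a3]
      subst b1 b2
      rfl
  have h4 := sq_card_le_fiber G B hB
  calc D ^ 2 * G.card ^ 2 ≤ D ^ 2 * (B.card * E.card) := Nat.mul_le_mul_left _ h4
    _ = B.card * (E.card * D ^ 2) := by ring
    _ ≤ t * _ := Nat.mul_le_mul hBt (h3.trans h2)

end Grid
end RichPoints

/-! ### Numerical estimates and finding a grid -/

namespace RichPoints

theorem cube_le_two_pow (r : ℕ) : r ^ 3 ≤ 27 * 2 ^ r := by
  rcases Nat.lt_or_ge r 4 with h | h
  · interval_cases r <;> norm_num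
  · induction r, h using Nat.le_induction with
    | base => norm_num
    | succ r hr ih =>
      rw [pow_succ 2 r]
      have : (r + 1) ^ 3 ≤ 2 * r ^ 3 := by nlinarith [Nat.mul_le_mul hr hr, Nat.mul_le_mul (Nat.mul_le_mul hr hr) hr, Nat.mul_le_mul (Nat.mul_le_mul hr hr) (le_refl r), Nat.mul_le_mul hr (le_refl r)]
      omega

/-- The bound of `grid_count` with `4^r` comparable to `t n` gives `g⁴ ≲ t n³`. The logarithmic factor
`r` is harmless because `t³ ≤ 2 t n` when `t² ≤ 2 n`. -/
theorem grid_arith (n t r g : ℕ) (ht : 2 ≤ t) (hn : t * t ≤ 2 * n) (h1 : t * n ≤ 4 ^ r)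
    (h2 : 4 ^ r ≤ 4 * (t * n))
    (h : (t - 1) ^ 2 * g ^ 2 ≤ t * (10422 * 8 ^ r + 4 * t * 4 ^ r + 864 * t * r * 4 ^ r)) :
    g ^ 4 ≤ 64 * 55544 ^ 2 * (t * n ^ 3) := by
  have e4 : 4 ^ r = (2 ^ r) ^ 2 := by rw [← pow_mul, mul_comm, pow_mul]; norm_num
  have e8 : 8 ^ r = (2 ^ r) ^ 3 := by rw [← pow_mul, mul_comm, pow_mul]; norm_num
  have hr := cube_le_two_pow r
  have ha : 1 ≤ 2 ^ r := Nat.one_le_two_pow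
  rw [e4] at h1 h2
  rw [e4, e8] at h
  generalize 2 ^ r = a at *
  have ht3 : t ^ 3 ≤ 2 * a ^ 2 := by nlinarith
  have htr : t * r ≤ 4 * a := by
    refine le_of_pow_le_pow_left₀ (n := 3) (by norm_num) (by positivity) ?_
    calc (t * r) ^ 3 = t ^ 3 * r ^ 3 := by ring
      _ ≤ (2 * a ^ 2) * (27 * a) := Nat.mul_le_mul ht3 hr
      _ ≤ (4 * a) ^ 3 := by ring_nf; omega
  have hta : t ≤ 2 * a := by
    refine le_of_pow_le_pow_left₀ (n := 3) (by norm_num) (by positivity) ?_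
    nlinarith [Nat.mul_le_mul_left (a ^ 2) ha]
  have h3 : t * g ^ 2 ≤ 55544 * a ^ 3 := by
    have e1 : t ^ 2 ≤ 4 * (t - 1) ^ 2 := by
      have : t ≤ 2 * (t - 1) := by omega
      nlinarith
    have e2 : t * (t * g ^ 2) ≤ t * (4 * (10422 * a ^ 3 + 4 * t * a ^ 2 + 864 * t * r * a ^ 2)) := by
      calc t * (t * g ^ 2) = t ^ 2 * g ^ 2 := by ring
        _ ≤ 4 * (t - 1) ^ 2 * g ^ 2 := Nat.mul_le_mul_right _ e1
        _ = 4 * ((t - 1) ^ 2 * g ^ 2) := by ring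
        _ ≤ 4 * (t * (10422 * a ^ 3 + 4 * t * a ^ 2 + 864 * t * r * a ^ 2)) :=
          Nat.mul_le_mul_left _ h
        _ = _ := by ring
    have e3 := Nat.le_of_mul_le_mul_left e2 (by omega)
    have e5 : t * a ^ 2 ≤ 2 * a ^ 3 := by
      calc t * a ^ 2 ≤ 2 * a * a ^ 2 := Nat.mul_le_mul_right _ hta
        _ = _ := by ring
    have e6 : t * r * a ^ 2 ≤ 4 * a ^ 3 := by
      calc t * r * a ^ 2 ≤ 4 * a * a ^ 2 := Nat.mul_le_mul_right _ htr
        _ = _ := by ring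
    nlinarith
  have h4 : t ^ 2 * g ^ 4 ≤ t ^ 2 * (64 * 55544 ^ 2 * (t * n ^ 3)) := by
    calc t ^ 2 * g ^ 4 = (t * g ^ 2) ^ 2 := by ring
      _ ≤ (55544 * a ^ 3) ^ 2 := Nat.pow_le_pow_left h3 2
      _ = 55544 ^ 2 * (a ^ 2) ^ 3 := by ring
      _ ≤ 55544 ^ 2 * (4 * (t * n)) ^ 3 := Nat.mul_le_mul_left _ (Nat.pow_le_pow_left h2 3)
      _ = _ := by ring
  exact Nat.le_of_mul_le_mul_left h4 (by positivity)

section Incidence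
variable {V W : Type*} (I : V → W → Prop) (P : Finset V)

/-- The points of `P`, other than `q₁` and `q₂`, joined to `q₁` and to `q₂` by two different lines, in
the sense of the incidence relation `I`. -/
def cross (q₁ q₂ : V) : Finset V :=
  P.filter fun x => x ≠ q₁ ∧ x ≠ q₂ ∧
    ∃ l₁ l₂, l₁ ≠ l₂ ∧ I x l₁ ∧ I x l₂ ∧ I q₁ l₁ ∧ I q₂ l₂

/-- If `P` has at least `8 n / t` points, each incident to exactly `t` of the `n` lines, some pair
`q₁, q₂` has `|cross q₁ q₂| ≥ t⁴ |P| / (512 n²)`: average over all pairs, using that most incidences are on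
lines with at least a quarter of the average number of points. -/
theorem exists_cross (L : Finset W) (t : ℕ) (ht : 2 ≤ t) (hP : P.Nonempty)
    (hlin : ∀ x y l l', x ≠ y → I x l → I y l → I x l' → I y l' → l = l')
    (hdeg : ∀ x ∈ P, (L.filter fun l => I x l).card = t) (hmt : 8 * L.card ≤ P.card * t) :
    ∃ q₁ ∈ P, ∃ q₂ ∈ P, (t : ℝ) ^ 4 * P.card ≤ 512 * (L.card : ℝ) ^ 2 * (cross I P q₁ q₂).card := by
  set d : W → ℕ := fun l => (P.filter fun x => I x l).card with hd
  set m : ℝ := (P.card : ℝ) with hm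
  set n : ℝ := (L.card : ℝ) with hn
  have hm0 : 0 < m := by rw [hm]; exact_mod_cast hP.card_pos
  have htR : (2 : ℝ) ≤ t := by exact_mod_cast ht
  have hn0 : 0 < n := by
    obtain ⟨x, hx⟩ := hP
    have h := hdeg x hx
    have : (L.filter fun l => I x l).card ≤ L.card := Finset.card_filter_le _ _
    rw [hn]; exact_mod_cast (by omega : 0 < L.card)
  set K : ℝ := m * t / n with hK
  have hK8 : 8 ≤ K := by
    rw [hK, le_div_iff₀ hn0, hm, hn]; exact_mod_cast hmt
  have hKn : K * n = m * t := by rw [hK]; field_simp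
  -- `H x`: the lines through `x` carrying at least a quarter of the average number `K` of points
  set H : V → Finset W := fun x => L.filter fun l => I x l ∧ K / 4 ≤ d l with hH
  have hHsum : 3 * (m * t) / 4 ≤ ∑ x ∈ P, ((H x).card : ℝ) := by
    set Q : V → Finset W := fun x => L.filter fun l => I x l ∧ ¬ K / 4 ≤ d l with hQ
    have e1 : ∀ x ∈ P, ((H x).card : ℝ) + (Q x).card = t := by
      intro x hx
      rw [← hdeg x hx, hH, hQ]
      rw [← Finset.card_filter_add_card_filter_not (s := L.filter fun l => I x l) (fun l => K / 4 ≤ (d l : ℝ)),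
        Finset.filter_filter, Finset.filter_filter]
      push_cast
      rfl
    have e2 : ∑ x ∈ P, (Q x).card = ∑ l ∈ L.filter (fun l => ¬ K / 4 ≤ d l), d l := by
      refine Eq.trans ?_ (Finset.sum_card_bipartiteAbove_eq_sum_card_bipartiteBelow I)
      refine Finset.sum_congr rfl fun x _ => ?_
      rw [hQ, Finset.bipartiteAbove, Finset.filter_filter]
      congr 1
      ext l
      simp [and_comm]
    have e3 : (∑ x ∈ P, ((Q x).card : ℝ)) ≤ m * t / 4 := by
      have : (∑ x ∈ P, ((Q x).card : ℝ)) = ∑ l ∈ L.filter (fun l => ¬ K / 4 ≤ d l), (d l : ℝ) := by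
        exact_mod_cast e2
      rw [this]
      calc ∑ l ∈ L.filter (fun l => ¬ K / 4 ≤ d l), (d l : ℝ)
          ≤ ∑ l ∈ L.filter (fun l => ¬ K / 4 ≤ d l), K / 4 :=
            Finset.sum_le_sum fun l hl => (not_le.1 (Finset.mem_filter.1 hl).2).le
        _ ≤ ∑ l ∈ L, K / 4 := Finset.sum_le_sum_of_subset_of_nonneg (Finset.filter_subset _ _)
            fun _ _ _ => by linarith
        _ = m * t / 4 := by rw [Finset.sum_const, nsmul_eq_mul, ← hn]; linarith
    have e4 := Finset.sum_congr rfl e1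
    rw [Finset.sum_add_distrib, Finset.sum_const, nsmul_eq_mul, ← hm] at e4
    linarith
  have hpairs : m * t ^ 2 / 8 ≤ ∑ x ∈ P, ((H x).card : ℝ) * ((H x).card - 1) := by
    have cs := sq_sum_le_card_mul_sum_sq (s := P) (f := fun x => ((H x).card : ℝ))
    rw [← hm] at cs
    have e : ∑ x ∈ P, ((H x).card : ℝ) * ((H x).card - 1) =
        ∑ x ∈ P, ((H x).card : ℝ) ^ 2 - ∑ x ∈ P, ((H x).card : ℝ) := by
      rw [← Finset.sum_sub_distrib]
      exact Finset.sum_congr rfl fun _ _ => by ring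
    rw [e]
    set s := ∑ x ∈ P, ((H x).card : ℝ)
    have h1 : m * (m * t ^ 2 / 8) ≤ s ^ 2 - m * s := by
      have : s * (s - m) ≥ (3 * (m * t) / 4) * (3 * (m * t) / 4 - m) := by
        apply mul_le_mul hHsum (by linarith) _ (by nlinarith)
        nlinarith
      nlinarith [mul_pos hm0 hm0, mul_nonneg (mul_pos hm0 hm0).le (by nlinarith : (0:ℝ) ≤ t * (t - 2))]
    have h2 : m * (m * t ^ 2 / 8) ≤ m * (∑ x ∈ P, ((H x).card : ℝ) ^ 2 - s) := by linarith
    exact le_of_mul_le_mul_left h2 hm0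
  -- for each `x`, count the pairs `(q₁, q₂)` with `x ∈ cross q₁ q₂`
  have hx : ∀ x ∈ P, ((H x).card : ℝ) * ((H x).card - 1) * (K ^ 2 / 64) ≤
      (((P ×ˢ P).filter fun q => x ∈ cross I P q.1 q.2).card : ℝ) := by
    intro x hx
    set R : W → Finset V := fun l => (P.filter fun y => I y l).erase x with hR
    have c1 : ((H x).offDiag.sigma fun w => R w.1 ×ˢ R w.2).card ≤
        ((P ×ˢ P).filter fun q => x ∈ cross I P q.1 q.2).card := by
      refine Finset.card_le_card_of_injOn (fun w => w.2) ?_ ?_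
      · rintro ⟨⟨l₁, l₂⟩, ⟨y, z⟩⟩ hw
        simp only [Finset.coe_sigma, Set.mem_sigma_iff, Finset.mem_coe, Finset.mem_offDiag, hH, hR,
          Finset.mem_filter, Finset.mem_product, Finset.mem_erase, cross] at hw ⊢
        obtain ⟨⟨⟨-, h1, -⟩, ⟨-, h2, -⟩, hne⟩, ⟨hy, hyP, hyl⟩, hz, hzP, hzl⟩ := hw
        exact ⟨⟨hyP, hzP⟩, hx, hy.symm, hz.symm, l₁, l₂, hne, h1, h2, hyl, hzl⟩
      · rintro ⟨⟨l₁, l₂⟩, ⟨y, z⟩⟩ hw ⟨⟨l₁', l₂'⟩, ⟨y', z'⟩⟩ hw' h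
        simp only [Finset.coe_sigma, Set.mem_sigma_iff, Finset.mem_coe, Finset.mem_offDiag, hH, hR,
          Finset.mem_filter, Finset.mem_product, Finset.mem_erase] at hw hw'
        obtain ⟨⟨⟨-, h1, -⟩, ⟨-, h2, -⟩, hne⟩, ⟨hy, hyP, hyl⟩, hz, hzP, hzl⟩ := hw
        obtain ⟨⟨⟨-, h1', -⟩, ⟨-, h2', -⟩, hne'⟩, ⟨hy', hyP', hyl'⟩, hz', hzP', hzl'⟩ := hw'
        simp only [Prod.mk.injEq] at h
        obtain ⟨rfl, rfl⟩ := h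
        have a1 := hlin _ _ _ _ hy hyl h1 hyl' h1'
        have a2 := hlin _ _ _ _ hz hzl h2 hzl' h2'
        subst a1 a2
        rfl
    have c2 : ∀ w ∈ (H x).offDiag, K ^ 2 / 64 ≤ ((R w.1 ×ˢ R w.2).card : ℝ) := by
      have c3 : ∀ l ∈ H x, K / 8 ≤ ((R l).card : ℝ) := by
        intro l hl
        simp only [hH, Finset.mem_filter] at hl
        have : ((R l).card : ℝ) + 1 = d l := by
          rw [hR]
          exact_mod_cast Finset.card_erase_add_one (Finset.mem_filter.2 ⟨hx, hl.2.1⟩)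
        linarith [hl.2.2]
      intro w hw
      rw [Finset.mem_offDiag] at hw
      rw [Finset.card_product, Nat.cast_mul]
      have := mul_le_mul (c3 _ hw.1) (c3 _ hw.2.1) (by linarith) (Nat.cast_nonneg _)
      calc K ^ 2 / 64 = K / 8 * (K / 8) := by ring
        _ ≤ _ := this
    have c4 : ((H x).offDiag.card : ℝ) * (K ^ 2 / 64) ≤
        (((H x).offDiag.sigma fun w => R w.1 ×ˢ R w.2).card : ℝ) := by
      rw [Finset.card_sigma, Nat.cast_sum, ← nsmul_eq_mul]
      exact Finset.card_nsmul_le_sum _ _ _ c2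
    have c5 : ((H x).offDiag.card : ℝ) = ((H x).card : ℝ) * ((H x).card - 1) := by
      rw [Finset.offDiag_card, Nat.cast_sub (Nat.le_mul_self _)]
      push_cast; ring
    rw [← c5]
    exact c4.trans (by exact_mod_cast c1)
  have hsum : m * t ^ 2 / 8 * (K ^ 2 / 64) ≤
      ∑ q ∈ P ×ˢ P, ((cross I P q.1 q.2).card : ℝ) := by
    have e1 : ∑ x ∈ P, ((P ×ˢ P).filter fun q => x ∈ cross I P q.1 q.2).card =
        ∑ q ∈ P ×ˢ P, (cross I P q.1 q.2).card := by
      have := Finset.sum_card_bipartiteAbove_eq_sum_card_bipartiteBelow (s := P) (t := P ×ˢ P)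
        (fun x q => x ∈ cross I P q.1 q.2)
      refine Eq.trans ?_ (this.trans ?_)
      · rfl
      · refine Finset.sum_congr rfl fun q _ => ?_
        congr 1
        ext x
        simp [Finset.bipartiteBelow, cross]
    have e2 : ∑ x ∈ P, (((P ×ˢ P).filter fun q => x ∈ cross I P q.1 q.2).card : ℝ) =
        ∑ q ∈ P ×ˢ P, ((cross I P q.1 q.2).card : ℝ) := by exact_mod_cast e1
    rw [← e2]
    refine le_trans ?_ (Finset.sum_le_sum hx)
    rw [← Finset.sum_mul]
    exact mul_le_mul_of_nonneg_right hpairs (by positivity)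
  by_contra hcon
  push Not at hcon
  have hlt : ∑ q ∈ P ×ˢ P, ((cross I P q.1 q.2).card : ℝ) <
      ∑ q ∈ P ×ˢ P, (t : ℝ) ^ 4 * m / (512 * n ^ 2) := by
    refine Finset.sum_lt_sum_of_nonempty (hP.product hP) fun q hq => ?_
    rw [Finset.mem_product] at hq
    rw [lt_div_iff₀ (by positivity)]
    linarith [hcon _ hq.1 _ hq.2]
  rw [Finset.sum_const, Finset.card_product, nsmul_eq_mul, Nat.cast_mul, ← hm] at hlt
  have : m * m * ((t : ℝ) ^ 4 * m / (512 * n ^ 2)) = m * t ^ 2 / 8 * (K ^ 2 / 64) := by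
    rw [hK]; field_simp; ring
  linarith

end Incidence
end RichPoints

/-! ### Lines in the plane and the projective map -/

namespace RichPoints
section Geometry
variable {p : ℕ} [Fact p.Prime]

theorem line_equation {l : Set (Fin 2 → ZMod p)} (h : IsLine l) :
    ∃ a b c : ZMod p, (a ≠ 0 ∨ b ≠ 0) ∧ ∀ x, x ∈ l ↔ a * x 0 + b * x 1 + c = 0 := by
  obtain ⟨f, hf, rfl⟩ := h
  have hf' : f = MvPolynomial.C (f.coeff (Finsupp.single 0 1)) * MvPolynomial.X 0 +
      MvPolynomial.C (f.coeff (Finsupp.single 1 1)) * MvPolynomial.X 1 +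
      MvPolynomial.C (f.coeff 0) := by
    ext s
    simp only [MvPolynomial.coeff_add, MvPolynomial.coeff_C_mul, MvPolynomial.coeff_X,
      MvPolynomial.coeff_C]
    have hs : s = Finsupp.single 0 (s 0) + Finsupp.single 1 (s 1) := by
      ext i; fin_cases i <;> simp
    by_cases hd : s 0 + s 1 ≤ 1
    · have : (s 0 = 0 ∧ s 1 = 0) ∨ (s 0 = 1 ∧ s 1 = 0) ∨ (s 0 = 0 ∧ s 1 = 1) := by omega
      rcases this with ⟨h0, h1⟩ | ⟨h0, h1⟩ | ⟨h0, h1⟩ <;> rw [h0, h1] at hs <;>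
        simp at hs <;> subst hs <;> simp [Finsupp.single_left_inj, eq_comm]
    · have e0 : f.coeff s = 0 := by
        refine MvPolynomial.coeff_eq_zero_of_totalDegree_lt ?_
        rw [hf]
        have : ∑ i ∈ s.support, s i = s 0 + s 1 := by
          rw [← Fin.sum_univ_two (fun i => s i)]
          exact Finset.sum_subset (Finset.subset_univ _) fun i _ hi => by simpa using hi
        omega
      have n1 : Finsupp.single 0 1 ≠ s := by rintro rfl; simp at hd
      have n2 : Finsupp.single 1 1 ≠ s := by rintro rfl; simp at hd
      have n3 : (0 : Fin 2 →₀ ℕ) ≠ s := by rintro rfl; simp at hd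
      simp [e0, n1, n2, n3]
  refine ⟨f.coeff (Finsupp.single 0 1), f.coeff (Finsupp.single 1 1), f.coeff 0, ?_, ?_⟩
  · by_contra hc
    push Not at hc
    rw [hc.1, hc.2] at hf'
    rw [hf'] at hf
    simp at hf
  · intro x
    show MvPolynomial.eval x f = 0 ↔ _
    conv_lhs => rw [hf']
    simp

theorem line_unique {l l' : Set (Fin 2 → ZMod p)} (h : IsLine l) (h' : IsLine l')
    {x y : Fin 2 → ZMod p} (hxy : x ≠ y) (hx : x ∈ l) (hy : y ∈ l) (hx' : x ∈ l') (hy' : y ∈ l') :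
    l = l' := by
  obtain ⟨a, b, c, hab, hl⟩ := line_equation h
  obtain ⟨a', b', c', hab', hl'⟩ := line_equation h'
  rw [hl] at hx hy
  rw [hl'] at hx' hy'
  have hne : x 0 - y 0 ≠ 0 ∨ x 1 - y 1 ≠ 0 := by
    by_contra hc
    push Not at hc
    refine hxy (funext fun i => ?_)
    fin_cases i
    · exact sub_eq_zero.1 hc.1
    · exact sub_eq_zero.1 hc.2
  have hd : a * b' = a' * b := by
    have e1 : a * (x 0 - y 0) + b * (x 1 - y 1) = 0 := by linear_combination hx - hy
    have e2 : a' * (x 0 - y 0) + b' * (x 1 - y 1) = 0 := by linear_combination hx' - hy'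
    rcases hne with h0 | h0
    · apply mul_right_cancel₀ h0; linear_combination b' * e1 - b * e2
    · apply mul_right_cancel₀ h0; linear_combination a * e2 - a' * e1
  ext z
  rw [hl, hl']
  have k1 : c = - (a * x 0 + b * x 1) := by linear_combination hx
  have k2 : c' = - (a' * x 0 + b' * x 1) := by linear_combination hx'
  subst k1 k2
  constructor
  · intro hz
    rcases hab with ha | hb
    · apply (mul_eq_zero.1 (_ : a * _ = 0)).resolve_left ha
      linear_combination a' * hz + (z 1 - x 1) * hd
    · apply (mul_eq_zero.1 (_ : b * _ = 0)).resolve_left hb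
      linear_combination b' * hz - (z 0 - x 0) * hd
  · intro hz
    rcases hab' with ha | hb
    · apply (mul_eq_zero.1 (_ : a' * _ = 0)).resolve_left ha
      linear_combination a * hz - (z 1 - x 1) * hd
    · apply (mul_eq_zero.1 (_ : b' * _ = 0)).resolve_left hb
      linear_combination b * hz + (z 0 - x 0) * hd

/-- The bound of `grid_count` for `cross q₁ q₂`. A projective map sending `q₁` and `q₂` to infinity
turns the `t` lines through `q₁` and the `t` lines through `q₂` into the two directions of a grid. Each
point keeps its lines except the one through `q₁`, hence the factor `t - 1`. -/
theorem cross_count (L : Finset (Set (Fin 2 → ZMod p))) (hL : ∀ l ∈ L, IsLine l)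
    (I : (Fin 2 → ZMod p) → Set (Fin 2 → ZMod p) → Prop) (P : Finset (Fin 2 → ZMod p)) (t r : ℕ)
    (hI : ∀ x l, I x l → l ∈ L ∧ x ∈ l)
    (hdeg : ∀ x ∈ P, (L.filter fun l => I x l).card = t) (q₁ q₂ : Fin 2 → ZMod p)
    (hq₁ : q₁ ∈ P) (hq₂ : q₂ ∈ P)
    (hr : t * L.card ≤ 4 ^ r) (hp : 3 * 2 ^ r ≤ p) :
    (t - 1) ^ 2 * (cross I P q₁ q₂).card ^ 2 ≤
      t * (10422 * 8 ^ r + 4 * t * 4 ^ r + 864 * t * r * 4 ^ r) := by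
  set G := cross I P q₁ q₂ with hG
  rcases G.eq_empty_or_nonempty with hemp | ⟨x₀, hx₀⟩
  · rw [hemp]; simp
  have hlin : ∀ x y l l', x ≠ y → l ∈ L → l' ∈ L → x ∈ l → y ∈ l → x ∈ l' → y ∈ l' → l = l' :=
    fun x y l l' hxy hl hl' h1 h2 h3 h4 => line_unique (hL _ hl) (hL _ hl') hxy h1 h2 h3 h4
  have hGm : ∀ x ∈ G, x ∈ P ∧ x ≠ q₁ ∧ x ≠ q₂ ∧
      ∃ l₁ l₂, l₁ ≠ l₂ ∧ I x l₁ ∧ I x l₂ ∧ I q₁ l₁ ∧ I q₂ l₂ := fun x hx => by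
    simpa only [hG, cross, Finset.mem_filter] using hx
  have hq : q₁ ≠ q₂ := by
    rintro rfl
    obtain ⟨-, h1, h2, l₁, l₂, hne, a1, a2, a3, a4⟩ := hGm x₀ hx₀
    exact hne (hlin _ _ _ _ h1 (hI _ _ a1).1 (hI _ _ a2).1 (hI _ _ a1).2 (hI _ _ a3).2
      (hI _ _ a2).2 (hI _ _ a4).2)
  have hcoef : ∀ l : Set (Fin 2 → ZMod p), ∃ abc : ZMod p × ZMod p × ZMod p, l ∈ L →
      (abc.1 ≠ 0 ∨ abc.2.1 ≠ 0) ∧ ∀ x, x ∈ l ↔ abc.1 * x 0 + abc.2.1 * x 1 + abc.2.2 = 0 := by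
    intro l
    by_cases h : l ∈ L
    · obtain ⟨a, b, c, h1, h2⟩ := line_equation (hL l h)
      exact ⟨(a, b, c), fun _ => ⟨h1, h2⟩⟩
    · exact ⟨0, fun h' => absurd h' h⟩
  choose co hco using hcoef
  set a := fun l => (co l).1 with ha
  set b := fun l => (co l).2.1 with hb
  set c := fun l => (co l).2.2 with hc
  have hab : ∀ l ∈ L, a l ≠ 0 ∨ b l ≠ 0 := fun l hl => (hco l hl).1
  have hmem : ∀ l ∈ L, ∀ x, x ∈ l ↔ a l * x 0 + b l * x 1 + c l = 0 := fun l hl => (hco l hl).2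
  clear_value a b c
  obtain ⟨w0, hw0⟩ : ∃ w, w = q₂ 0 - q₁ 0 := ⟨_, rfl⟩
  obtain ⟨w1, hw1⟩ : ∃ w, w = q₂ 1 - q₁ 1 := ⟨_, rfl⟩
  obtain ⟨e0, e1, he⟩ : ∃ e0 e1, e0 * w0 + e1 * w1 = 1 := by
    by_cases h0 : w0 = 0
    · have h1 : w1 ≠ 0 := by
        intro h1
        refine hq (funext fun i => ?_)
        fin_cases i
        · exact (sub_eq_zero.1 (hw0.symm.trans h0)).symm
        · exact (sub_eq_zero.1 (hw1.symm.trans h1)).symm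
      exact ⟨0, w1⁻¹, by field_simp; ring⟩
    · exact ⟨w0⁻¹, 0, by field_simp; ring⟩
  -- `m0` is an equation of the line `q₁ q₂`, and `m1` takes the values `0` at `q₁` and `1` at `q₂`. In the
  -- coordinates `φ = (u, v)` the lines through `q₁` are `u = const`, those through `q₂` are `v = const`.
  set m0 : (Fin 2 → ZMod p) → ZMod p := fun x => w1 * (x 0 - q₁ 0) - w0 * (x 1 - q₁ 1) with hm0
  set m1 : (Fin 2 → ZMod p) → ZMod p := fun x => e0 * (x 0 - q₁ 0) + e1 * (x 1 - q₁ 1) with hm1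
  set φ : (Fin 2 → ZMod p) → ZMod p × ZMod p := fun x => (m1 x / m0 x, (m1 x - 1) / m0 x) with hφ
  -- `s l` vanishes exactly when the line passes through `q₁`
  set s : Set (Fin 2 → ZMod p) → ZMod p := fun l => a l * q₁ 0 + b l * q₁ 1 + c l with hs
  -- `ψ l` is the slope and intercept of `φ l` for `l` not through `q₁`; `ρ l` is the constant value of
  -- `u` or `v` on a line through `q₁` or `q₂`.
  set ψ : Set (Fin 2 → ZMod p) → ZMod p × ZMod p := fun l =>
    ((a l * w0 + b l * w1) / s l + 1, (a l * e1 - b l * e0) / s l) with hψ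
  set ρ : Set (Fin 2 → ZMod p) → ZMod p := fun l =>
    (e0 * b l - e1 * a l) / (w1 * b l + w0 * a l) with hρ
  have hnz : ∀ x ∈ G, m0 x ≠ 0 := by
    intro x hx h0
    obtain ⟨-, h1, h2, l₁, l₂, hne, a1, a2, a3, a4⟩ := hGm x hx
    have k0 : x 0 - q₁ 0 = m1 x * w0 := by
      simp only [hm1, hm0] at h0 ⊢; linear_combination (-(x 0 - q₁ 0)) * he + e1 * h0
    have k1 : x 1 - q₁ 1 = m1 x * w1 := by
      simp only [hm1, hm0] at h0 ⊢; linear_combination (-(x 1 - q₁ 1)) * he - e0 * h0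
    have hm1x : m1 x ≠ 0 := by
      intro h
      rw [h, zero_mul] at k0 k1
      refine h1 (funext fun i => ?_)
      fin_cases i
      · exact sub_eq_zero.1 k0
      · exact sub_eq_zero.1 k1
    have hq2 : q₂ ∈ l₁ := by
      have b1 := (hmem _ (hI _ _ a1).1 _).1 (hI _ _ a1).2
      have b3 := (hmem _ (hI _ _ a3).1 _).1 (hI _ _ a3).2
      rw [hmem _ (hI _ _ a1).1]
      apply (mul_eq_zero.1 (_ : m1 x * _ = 0)).resolve_left hm1x
      rw [hw0] at k0
      rw [hw1] at k1
      linear_combination b1 - b3 + m1 x * b3 - a l₁ * k0 - b l₁ * k1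
    exact hne (hlin _ _ _ _ h2 (hI _ _ a1).1 (hI _ _ a2).1 (hI _ _ a1).2 hq2
      (hI _ _ a2).2 (hI _ _ a4).2)
  have hφinj : Set.InjOn φ G := by
    intro x hx y hy h
    have hx0 := hnz x hx
    have hy0 := hnz y hy
    simp only [hφ, Prod.mk.injEq] at h
    obtain ⟨h1, h2⟩ := h
    rw [div_eq_div_iff hx0 hy0] at h1 h2
    have k0 : m0 x = m0 y := by linear_combination h2 - h1
    rw [k0] at h1
    have k1 := mul_right_cancel₀ hy0 h1
    simp only [hm0, hm1] at k0 k1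
    funext i
    fin_cases i
    · show x 0 = y 0
      linear_combination (-(x 0 - y 0)) * he + e1 * k0 + w0 * k1
    · show x 1 = y 1
      linear_combination (-(x 1 - y 1)) * he - e0 * k0 + w1 * k1
  have hρ1 : ∀ x ∈ G, ∃ l, I q₁ l ∧ ρ l = (φ x).1 := by
    intro x hx
    obtain ⟨-, h1, h2, l₁, l₂, hne, a1, a2, a3, a4⟩ := hGm x hx
    refine ⟨l₁, a3, ?_⟩
    have b1 := (hmem _ (hI _ _ a1).1 _).1 (hI _ _ a1).2
    have b3 := (hmem _ (hI _ _ a3).1 _).1 (hI _ _ a3).2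
    have hx0 := hnz x hx
    have hl := hab _ (hI _ _ a1).1
    have hz : w1 * b l₁ + w0 * a l₁ ≠ 0 := by
      intro hz
      rcases hl with hl | hl
      · apply hx0; apply (mul_eq_zero.1 (_ : a l₁ * _ = 0)).resolve_left hl
        simp only [hm0]
        linear_combination w1 * (b1 - b3) - (x 1 - q₁ 1) * hz
      · apply hx0; apply (mul_eq_zero.1 (_ : b l₁ * _ = 0)).resolve_left hl
        simp only [hm0]
        linear_combination -w0 * (b1 - b3) + (x 0 - q₁ 0) * hz
    simp only [hρ, hφ]
    rw [div_eq_div_iff hz hx0]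
    simp only [hm0, hm1]
    linear_combination (-(e0 * w0 + e1 * w1)) * (b1 - b3)
  have hρ2 : ∀ x ∈ G, ∃ l, I q₂ l ∧ ρ l = (φ x).2 := by
    intro x hx
    obtain ⟨-, h1, h2, l₁, l₂, hne, a1, a2, a3, a4⟩ := hGm x hx
    refine ⟨l₂, a4, ?_⟩
    have b1 := (hmem _ (hI _ _ a2).1 _).1 (hI _ _ a2).2
    have b3 := (hmem _ (hI _ _ a4).1 _).1 (hI _ _ a4).2
    have hx0 := hnz x hx
    have hl := hab _ (hI _ _ a2).1
    have z0 : q₁ 0 = q₂ 0 - w0 := by rw [hw0]; ring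
    have z1 : q₁ 1 = q₂ 1 - w1 := by rw [hw1]; ring
    have hz : w1 * b l₂ + w0 * a l₂ ≠ 0 := by
      intro hz
      rcases hl with hl | hl
      · apply hx0; apply (mul_eq_zero.1 (_ : a l₂ * _ = 0)).resolve_left hl
        simp only [hm0, z0, z1]
        linear_combination w1 * (b1 - b3) - (x 1 - q₂ 1) * hz
      · apply hx0; apply (mul_eq_zero.1 (_ : b l₂ * _ = 0)).resolve_left hl
        simp only [hm0, z0, z1]
        linear_combination -w0 * (b1 - b3) + (x 0 - q₂ 0) * hz
    simp only [hρ, hφ]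
    rw [div_eq_div_iff hz hx0]
    simp only [hm0, hm1, z0, z1]
    linear_combination (-(e0 * w0 + e1 * w1)) * (b1 - b3) - (w1 * b l₂ + w0 * a l₂) * he
  have hψinc : ∀ x ∈ G, ∀ l ∈ L, q₁ ∉ l → x ∈ l → (φ x).2 = (ψ l).1 * (φ x).1 + (ψ l).2 := by
    intro x hx l hl hql hxl
    have hx0 := hnz x hx
    have hs0 : s l ≠ 0 := fun h => hql ((hmem l hl _).2 h)
    have hxl' := (hmem l hl _).1 hxl
    have key : (m1 x - 1) * s l = (a l * w0 + b l * w1 + s l) * m1 x + (a l * e1 - b l * e0) * m0 x := by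
      simp only [hs, hm0, hm1]
      linear_combination -hxl' - (a l * (x 0 - q₁ 0) + b l * (x 1 - q₁ 1)) * he
    simp only [hφ, hψ]
    field_simp
    linear_combination key
  have hψinj : ∀ l ∈ L, ∀ l' ∈ L, q₁ ∉ l → q₁ ∉ l' → ψ l = ψ l' → l = l' := by
    intro l hl l' hl' hq hq' h
    have hs0 : s l ≠ 0 := fun h => hq ((hmem l hl _).2 h)
    have hs0' : s l' ≠ 0 := fun h => hq' ((hmem l' hl' _).2 h)
    simp only [hψ, Prod.mk.injEq, add_left_inj] at h
    obtain ⟨h1, h2⟩ := h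
    rw [div_eq_div_iff hs0 hs0'] at h1 h2
    have ka : a l * s l' = a l' * s l := by
      linear_combination (-(a l * s l' - a l' * s l)) * he + e0 * h1 + w1 * h2
    have kb : b l * s l' = b l' * s l := by
      linear_combination (-(b l * s l' - b l' * s l)) * he + e1 * h1 - w0 * h2
    have kc : c l * s l' = c l' * s l := by
      have d1 : s l = a l * q₁ 0 + b l * q₁ 1 + c l := rfl
      have d2 : s l' = a l' * q₁ 0 + b l' * q₁ 1 + c l' := rfl
      linear_combination (-q₁ 0) * ka - q₁ 1 * kb - s l' * d1 + s l * d2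
    ext z
    rw [hmem l hl, hmem l' hl']
    constructor
    · intro hz
      apply (mul_eq_zero.1 (_ : s l * _ = 0)).resolve_left hs0
      linear_combination s l' * hz - z 0 * ka - z 1 * kb - kc
    · intro hz
      apply (mul_eq_zero.1 (_ : s l' * _ = 0)).resolve_left hs0'
      linear_combination s l * hz + z 0 * ka + z 1 * kb + kc
  clear_value φ ψ ρ
  have hcardG : (G.image φ).card = G.card := Finset.card_image_of_injOn hφinj
  rw [← hcardG]
  have hΛ : (L.image ψ).card ≤ L.card := Finset.card_image_le
  obtain ⟨J, hJ⟩ : ∃ J : ZMod p × ZMod p → ZMod p × ZMod p → Prop,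
      ∀ y k, J y k ↔ ∃ x ∈ G, ∃ l, I x l ∧ q₁ ∉ l ∧ φ x = y ∧ ψ l = k :=
    ⟨_, fun _ _ => Iff.rfl⟩
  refine grid_count J
    ((L.filter fun l => I q₁ l).image ρ) ((L.filter fun l => I q₂ l).image ρ)
    (L.image ψ) (G.image φ) t (t - 1) r ?_ ?_ ?_ ?_ ?_ ?_ ?_ ?_ ?_
    ((Nat.mul_le_mul_left _ hΛ).trans hr) hp
  · intro y k hyk
    obtain ⟨x, hx, l, hxl, hql, rfl, rfl⟩ := (hJ _ _).1 hyk
    exact hψinc x hx l (hI _ _ hxl).1 hql (hI _ _ hxl).2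
  · intro y k hyk
    obtain ⟨x, hx, l, hxl, hql, rfl, rfl⟩ := (hJ _ _).1 hyk
    exact Finset.mem_image_of_mem _ hx
  · intro y k hyk
    obtain ⟨x, hx, l, hxl, hql, rfl, rfl⟩ := (hJ _ _).1 hyk
    exact Finset.mem_image_of_mem _ (hI _ _ hxl).1
  · intro y hy
    obtain ⟨x, hx, rfl⟩ := Finset.mem_image.1 hy
    obtain ⟨l, hl, h⟩ := hρ1 x hx
    exact Finset.mem_image.2 ⟨l, Finset.mem_filter.2 ⟨(hI _ _ hl).1, hl⟩, h⟩
  · intro y hy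
    obtain ⟨x, hx, rfl⟩ := Finset.mem_image.1 hy
    obtain ⟨l, hl, h⟩ := hρ2 x hx
    exact Finset.mem_image.2 ⟨l, Finset.mem_filter.2 ⟨(hI _ _ hl).1, hl⟩, h⟩
  · exact Finset.card_image_le.trans (hdeg q₁ hq₁).le
  · exact Finset.card_image_le.trans (hdeg q₂ hq₂).le
  · intro y
    by_cases hy : ∃ x ∈ G, φ x = y
    · obtain ⟨x, hx, rfl⟩ := hy
      rw [← hdeg x (hGm x hx).1]
      refine le_trans (Finset.card_le_card ?_) (Finset.card_image_le (f := ψ))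
      intro k hk
      obtain ⟨x', hx', l, hxl, hql, h1, rfl⟩ := (hJ _ _).1 (Finset.mem_filter.1 hk).2
      have := hφinj hx' hx h1
      subst this
      exact Finset.mem_image_of_mem _ (Finset.mem_filter.2 ⟨(hI _ _ hxl).1, hxl⟩)
    · rw [Finset.filter_eq_empty_iff.2]
      · simp
      · intro k _ hk
        obtain ⟨x, hx, -, -, -, h, -⟩ := (hJ _ _).1 hk
        exact hy ⟨x, hx, h⟩
  · intro y hy
    obtain ⟨x, hx, rfl⟩ := Finset.mem_image.1 hy
    obtain ⟨hxP, h1, h2, l₁, l₂, hne, a1, a2, a3, a4⟩ := hGm x hx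
    have c1 : t - 1 ≤ ((L.filter fun l => I x l).erase l₁).card := by
      rw [← hdeg x hxP]; exact Finset.pred_card_le_card_erase
    have hsub : ∀ l ∈ (L.filter fun l => I x l).erase l₁, l ∈ L ∧ I x l ∧ q₁ ∉ l := by
      intro l hl
      rw [Finset.mem_erase, Finset.mem_filter] at hl
      refine ⟨hl.2.1, hl.2.2, fun hq => hl.1 ?_⟩
      exact hlin _ _ _ _ h1 hl.2.1 (hI _ _ a1).1 (hI _ _ hl.2.2).2 hq (hI _ _ a1).2 (hI _ _ a3).2
    have c2 : (((L.filter fun l => I x l).erase l₁).image ψ).card =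
        ((L.filter fun l => I x l).erase l₁).card := by
      refine Finset.card_image_of_injOn fun l hl l' hl' h => ?_
      have d1 := hsub l hl
      have d2 := hsub l' hl'
      exact hψinj l d1.1 l' d2.1 d1.2.2 d2.2.2 h
    rw [← c2] at c1
    refine c1.trans (Finset.card_le_card ?_)
    intro k hk
    obtain ⟨l, hl, rfl⟩ := Finset.mem_image.1 hk
    have d := hsub l hl
    exact Finset.mem_filter.2 ⟨Finset.mem_image_of_mem _ d.1,
      (hJ _ _).2 ⟨x, hx, l, d.2.1, d.2.2, rfl, rfl⟩⟩

end Geometry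
end RichPoints

/-! ### The rich points bound -/

namespace RichPoints

/-- The Cauchy–Schwarz incidence bound, from the fact that two points lie on at most one line. -/
theorem card_mul_sq_le {V W : Type*} (I : V → W → Prop) (P : Finset V) (L : Finset W) (t : ℕ)
    (hlin : ∀ x y l l', x ≠ y → I x l → I y l → I x l' → I y l' → l = l')
    (hdeg : ∀ x ∈ P, (L.filter fun l => I x l).card = t) (hP : P.Nonempty) :
    P.card * t ^ 2 ≤ L.card * (t + P.card) := by
  have h1 : ∑ l ∈ L, (P.filter fun x => I x l).card = P.card * t := by
    have := Finset.sum_card_bipartiteAbove_eq_sum_card_bipartiteBelow (s := P) (t := L) I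
    refine Eq.trans this.symm ?_
    rw [← smul_eq_mul, ← Finset.sum_const]
    exact Finset.sum_congr rfl hdeg
  have h2 : ∑ l ∈ L, (P.filter fun x => I x l).card ^ 2 ≤ P.card * (t + P.card) := by
    have e1 : ∑ l ∈ L, (P.filter fun x => I x l).card ^ 2 =
        ∑ q ∈ P ×ˢ P, (L.filter fun l => I q.1 l ∧ I q.2 l).card := by
      have := Finset.sum_card_bipartiteAbove_eq_sum_card_bipartiteBelow (s := P ×ˢ P) (t := L)
        (fun q l => I q.1 l ∧ I q.2 l)
      refine Eq.trans ?_ this.symm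
      refine Finset.sum_congr rfl fun l _ => ?_
      rw [sq, ← Finset.card_product, Finset.bipartiteBelow, ← Finset.filter_product]
    rw [e1, Finset.sum_product, ← smul_eq_mul, ]
    refine Finset.sum_le_card_nsmul _ _ _ fun x hx => ?_
    rw [← Finset.add_sum_erase _ _ hx]
    refine Nat.add_le_add ?_ ?_
    · simp only [and_self]
      exact (hdeg x hx).le
    · calc ∑ y ∈ P.erase x, (L.filter fun l => I x l ∧ I y l).card ≤ ∑ y ∈ P.erase x, 1 := by
            refine Finset.sum_le_sum fun y hy => ?_
            rw [Finset.card_le_one]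
            intro l hl l' hl'
            rw [Finset.mem_filter] at hl hl'
            exact hlin x y l l' (Finset.ne_of_mem_erase hy).symm hl.2.1 hl.2.2 hl'.2.1 hl'.2.2
        _ ≤ P.card := by
            rw [Finset.sum_const, smul_eq_mul, mul_one]
            exact Finset.card_erase_le
  have cs := sq_sum_le_card_mul_sum_sq (s := L) (f := fun l => (P.filter fun x => I x l).card)
  rw [h1] at cs
  have h3 : P.card * (P.card * t ^ 2) ≤ P.card * (L.card * (t + P.card)) := by
    calc P.card * (P.card * t ^ 2) = (P.card * t) ^ 2 := by ring
      _ ≤ _ := cs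
      _ ≤ L.card * (P.card * (t + P.card)) := Nat.mul_le_mul_left _ h2
      _ = _ := by ring
  exact Nat.le_of_mul_le_mul_left h3 hP.card_pos

/-- A power `4^r` comparable to `t n` whose square root is below `p / 3`. Since `t² ≤ 2 n`, this needs
`n^(3/4) ≲ p`, that is `n ≲ p^(4/3)`; the assumption `n ≤ p^(15/13)` gives `n⁶ ≤ p⁷`, with room to absorb
the constants when `p ≥ 2592²`. -/
theorem exists_scale (p n t : ℕ) (hn : n ^ 13 ≤ p ^ 15) (hp : 2592 ^ 2 ≤ p) (ht : 2 ≤ t) (hn0 : 0 < n)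
    (htn : t * t ≤ 2 * n) :
    ∃ r, t * n ≤ 4 ^ r ∧ 4 ^ r ≤ 4 * (t * n) ∧ 3 * 2 ^ r ≤ p := by
  have h1 : 1 < t * n := by nlinarith
  have h4 : 4 ^ Nat.clog 4 (t * n) ≤ 4 * (t * n) := by
    have := Nat.pow_pred_clog_lt_self (b := 4) (by norm_num) h1
    have hpos : 0 < Nat.clog 4 (t * n) := Nat.clog_pos (by norm_num) h1
    obtain ⟨k, hk⟩ := Nat.exists_eq_succ_of_ne_zero hpos.ne'
    rw [hk] at this ⊢
    simp only [Nat.succ_eq_add_one, Nat.pred_eq_sub_one, Nat.add_sub_cancel] at this ⊢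
    rw [pow_succ]; omega
  refine ⟨Nat.clog 4 (t * n), Nat.le_pow_clog (by norm_num) _, h4, ?_⟩
  generalize Nat.clog 4 (t * n) = r at *
  have e4 : 4 ^ r = (2 ^ r) ^ 2 := by rw [← pow_mul, mul_comm, pow_mul]; norm_num
  rw [e4] at h4
  generalize 2 ^ r = a at *
  have hp0 : 1 ≤ p := by omega
  have h6 : n ^ 6 ≤ p ^ 7 := by
    refine le_of_pow_le_pow_left₀ (n := 13) (by norm_num) (by positivity) ?_
    calc (n ^ 6) ^ 13 = (n ^ 13) ^ 6 := by ring
      _ ≤ (p ^ 15) ^ 6 := Nat.pow_le_pow_left hn 6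
      _ = p ^ 90 := by ring
      _ ≤ p ^ 91 := Nat.pow_le_pow_right hp0 (by norm_num)
      _ = _ := by ring
  refine le_of_pow_le_pow_left₀ (n := 8) (by norm_num) (by positivity) ?_
  calc (3 * a) ^ 8 = 3 ^ 8 * (a ^ 2) ^ 4 := by ring
    _ ≤ 3 ^ 8 * (4 * (t * n)) ^ 4 := Nat.mul_le_mul_left _ (Nat.pow_le_pow_left h4 4)
    _ = 3 ^ 8 * 4 ^ 4 * n ^ 4 * (t * t) ^ 2 := by ring
    _ ≤ 3 ^ 8 * 4 ^ 4 * n ^ 4 * (2 * n) ^ 2 :=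
      Nat.mul_le_mul_left _ (Nat.pow_le_pow_left htn 2)
    _ = 2592 ^ 2 * n ^ 6 := by ring
    _ ≤ p * p ^ 7 := Nat.mul_le_mul hp h6
    _ = p ^ 8 := by ring

/-- The bound in terms of natural numbers, with the constant `10 ^ 14`. -/
theorem rich_points_nat (p : ℕ) [Fact p.Prime] (L : Finset (Set (Fin 2 → ZMod p)))
    (hL : ∀ l ∈ L, IsLine l) (hn : L.card ^ 13 ≤ p ^ 15) (t : ℕ) (ht : 2 ≤ t)
    (P : Finset (Fin 2 → ZMod p)) (hP : ∀ x ∈ P, t ≤ (L.filter fun l => x ∈ l).card) :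
    P.card * t ≤ 10 ^ 14 * L.card ∨ t ^ 15 * P.card ^ 4 ≤ (10 ^ 14) ^ 4 * L.card ^ 11 := by
  rcases P.eq_empty_or_nonempty with hemp | hne
  · left; simp [hemp]
  have htn : t ≤ L.card := by
    obtain ⟨x, hx⟩ := hne
    exact (hP x hx).trans (Finset.card_filter_le _ _)
  rcases lt_or_ge p (2592 ^ 2) with hsmall | hp
  · left
    have h1 : P.card ≤ p ^ 2 := by
      refine (Finset.card_le_univ P).trans ?_
      simp [ZMod.card]
    have h2 : P.card ≤ 10 ^ 14 := h1.trans (by nlinarith)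
    exact Nat.mul_le_mul h2 htn
  have hex : ∀ x : Fin 2 → ZMod p, ∃ M : Finset (Set (Fin 2 → ZMod p)), x ∈ P →
      (M ⊆ L.filter fun l => x ∈ l) ∧ M.card = t := by
    intro x
    by_cases hx : x ∈ P
    · obtain ⟨M, h⟩ := Finset.exists_subset_card_eq (hP x hx)
      exact ⟨M, fun _ => h⟩
    · exact ⟨∅, fun h => absurd h hx⟩
  -- `I x l` keeps exactly `t` of the lines through each point of `P`.
  choose M hM using hex
  obtain ⟨I, hIdef⟩ : ∃ I : (Fin 2 → ZMod p) → Set (Fin 2 → ZMod p) → Prop,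
      ∀ x l, I x l ↔ x ∈ P ∧ l ∈ M x := ⟨_, fun _ _ => Iff.rfl⟩
  have hI : ∀ x l, I x l → l ∈ L ∧ x ∈ l := by
    intro x l h
    obtain ⟨hx, hl⟩ := (hIdef x l).1 h
    exact Finset.mem_filter.1 ((hM x hx).1 hl)
  have hdeg : ∀ x ∈ P, (L.filter fun l => I x l).card = t := by
    intro x hx
    rw [← (hM x hx).2]
    congr 1
    ext l
    rw [Finset.mem_filter, hIdef]
    exact ⟨fun h => h.2.2, fun h => ⟨(Finset.mem_filter.1 ((hM x hx).1 h)).1, hx, h⟩⟩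
  have hlin : ∀ x y l l', x ≠ y → I x l → I y l → I x l' → I y l' → l = l' :=
    fun x y l l' hxy h1 h2 h3 h4 => line_unique (hL _ (hI _ _ h1).1) (hL _ (hI _ _ h3).1) hxy
      (hI _ _ h1).2 (hI _ _ h2).2 (hI _ _ h3).2 (hI _ _ h4).2
  rcases lt_or_ge (P.card * t) (8 * L.card) with hfew | hmany
  · left; omega
  rcases lt_or_ge (2 * L.card) (t * t) with hbig | htt
  · left
    have h := card_mul_sq_le I P L t hlin hdeg hne
    have h2 : t * (P.card * t) ≤ t * (2 * L.card) := by nlinarith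
    have := Nat.le_of_mul_le_mul_left h2 (by omega)
    omega
  · right
    obtain ⟨r, h1, h2, h3⟩ := exists_scale p L.card t hn hp ht (by omega) htt
    obtain ⟨q₁, hq₁, q₂, hq₂, hc⟩ := exists_cross I P L t ht hne hlin hdeg hmany
    have hg := grid_arith L.card t r _ ht htt h1 h2
      (cross_count L hL I P t r hI hdeg q₁ q₂ hq₁ hq₂ h1 h3)
    have hc' : t ^ 4 * P.card ≤ 512 * L.card ^ 2 * (cross I P q₁ q₂).card := by exact_mod_cast hc
    generalize (cross I P q₁ q₂).card = g at *
    generalize P.card = m at *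
    generalize L.card = n at *
    have h4 : t * (t ^ 15 * m ^ 4) ≤ t * (512 ^ 4 * 64 * 55544 ^ 2 * n ^ 11) := by
      calc t * (t ^ 15 * m ^ 4) = (t ^ 4 * m) ^ 4 := by ring
        _ ≤ (512 * n ^ 2 * g) ^ 4 := Nat.pow_le_pow_left hc' 4
        _ = 512 ^ 4 * n ^ 8 * g ^ 4 := by ring
        _ ≤ 512 ^ 4 * n ^ 8 * (64 * 55544 ^ 2 * (t * n ^ 3)) := Nat.mul_le_mul_left _ hg
        _ = _ := by ring
    refine (Nat.le_of_mul_le_mul_left h4 (by omega)).trans ?_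
    exact Nat.mul_le_mul_right _ (by norm_num)

end RichPoints

theorem rich_points_bound :
    ∃ c : ℝ, 0 < c ∧ ∀ p : ℕ, p.Prime →
      ∀ L : Finset (Set (Fin 2 → ZMod p)), (∀ l ∈ L, IsLine l) →
        (L.card : ℝ) ≤ (p : ℝ) ^ ((15 : ℝ) / 13) →
        ∀ t : ℕ, 2 ≤ t →
          (({x : Fin 2 → ZMod p | t ≤ (L.filter fun l => x ∈ l).card}.ncard : ℝ)) ≤
            c * ((L.card : ℝ) ^ ((11 : ℝ) / 4) / (t : ℝ) ^ ((15 : ℝ) / 4)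
              + (L.card : ℝ) / (t : ℝ)) := by
  refine ⟨10 ^ 14, by norm_num, fun p hp L hL hn t ht => ?_⟩
  have : Fact p.Prime := ⟨hp⟩
  have hfin : {x : Fin 2 → ZMod p | t ≤ (L.filter fun l => x ∈ l).card}.Finite := Set.toFinite _
  rw [Set.ncard_eq_toFinset_card _ hfin]
  have hn' : L.card ^ 13 ≤ p ^ 15 := by
    have h : (L.card : ℝ) ^ 13 ≤ ((p : ℝ) ^ ((15 : ℝ) / 13)) ^ 13 :=
      pow_le_pow_left₀ (Nat.cast_nonneg _) hn 13
    rw [← Real.rpow_natCast ((p : ℝ) ^ ((15 : ℝ) / 13)), ← Real.rpow_mul (Nat.cast_nonneg _)] at h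
    have e : (15 : ℝ) / 13 * ((13 : ℕ) : ℝ) = ((15 : ℕ) : ℝ) := by norm_num
    rw [e, Real.rpow_natCast] at h
    exact_mod_cast h
  have key := RichPoints.rich_points_nat p L hL hn' t ht hfin.toFinset
    fun x hx => by simpa using hx
  generalize hfin.toFinset.card = m at key ⊢
  generalize L.card = n at key ⊢
  have ht0 : (0 : ℝ) < t := by exact_mod_cast (by omega : 0 < t)
  rw [mul_add]
  have hA : 0 ≤ (10 : ℝ) ^ 14 * ((n : ℝ) ^ ((11 : ℝ) / 4) / (t : ℝ) ^ ((15 : ℝ) / 4)) := by positivity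
  have hB : 0 ≤ (10 : ℝ) ^ 14 * ((n : ℝ) / t) := by positivity
  rcases key with key | key
  · have : (m : ℝ) ≤ (10 : ℝ) ^ 14 * ((n : ℝ) / t) := by
      rw [← mul_div_assoc, le_div_iff₀ ht0]
      exact_mod_cast key
    linarith
  · have : (m : ℝ) ≤ (10 : ℝ) ^ 14 * ((n : ℝ) ^ ((11 : ℝ) / 4) / (t : ℝ) ^ ((15 : ℝ) / 4)) := by
      rw [← mul_div_assoc, le_div_iff₀ (by positivity)]
      refine le_of_pow_le_pow_left₀ (n := 4) (by norm_num) (by positivity) ?_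
      have e1 : ((n : ℝ) ^ ((11 : ℝ) / 4)) ^ 4 = (n : ℝ) ^ 11 := by
        rw [← Real.rpow_natCast ((n : ℝ) ^ ((11 : ℝ) / 4)), ← Real.rpow_mul (Nat.cast_nonneg _),
          ← Real.rpow_natCast (n : ℝ) 11]
        norm_num
      have e2 : ((t : ℝ) ^ ((15 : ℝ) / 4)) ^ 4 = (t : ℝ) ^ 15 := by
        rw [← Real.rpow_natCast ((t : ℝ) ^ ((15 : ℝ) / 4)), ← Real.rpow_mul (Nat.cast_nonneg _),
          ← Real.rpow_natCast (t : ℝ) 15]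
        norm_num
      rw [mul_pow, mul_pow, e1, e2, mul_comm]
      exact_mod_cast key
    linarith
end
end
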